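/- (Multiple Bailey transformation II.) Let a, x ∈ ℂ^m and s, c_0, c_1, c_2, d_0, d_1, d_2 ∈ ℂ satisfy Σ_{i=1}^m a_i + Σ_{k=0}^{2}(c_k + d_k) = 2δ + 3s and d_2 = −Nδ for some N ∈ ℕ. Set s̃ = δ + 2s − c_0 − c_1 − c_2, c̃_0 = δ + s − c_1 − c_2, c̃_1 = δ + s − c_0 − c_2, c̃_2 = δ + s − c_0 − c_1, and x̃_i = a_i − x_i − |a| for i = 1,…,m, where |a| = a_1 + ⋯ + a_m. Then, for generic parameters (all brackets appearing in denominators nonzero): E^{m,3}( a; (x̃_1,…,x̃_m) | s̃; (c̃_0, c̃_1, c̃_2); (d_0, d_1, d_2) ) = ∏_{i=1}^m ( [δ+s+x_i−a_i]_N [δ+s+x_i−d_1]_N / ([δ+s+x_i]_N [δ+s+x_i−a_i−d_1]_N) ) · ∏_{i=1}^m ( [δ+s̃+x̃_i]_N [δ+s̃+x̃_i−a_i−d_1]_N / ([δ+s̃+x̃_i−a_i]_N [δ+s̃+x̃_i−d_1]_N) ) · E^{m,3}( a; x | s; (c_0, c_1, c_2); (d_0, d_1, d_2) ). -/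

import Mathlib

open Finset

/-- Shifted factorial `[x]_k = [x][x+δ]⋯[x+(k-1)δ]` with respect to the bracket `f`. -/
noncomputable def sf (f : ℂ → ℂ) (δ : ℂ) (x : ℂ) (k : ℕ) : ℂ :=
  ∏ i ∈ Finset.range k, f (x + (i : ℂ) * δ)

/-- Difference product `Δ(x) = ∏_{i<j} [x_i - x_j]`. -/
noncomputable def Del (f : ℂ → ℂ) {m : ℕ} (x : Fin m → ℂ) : ℂ :=
  ∏ i : Fin m, ∏ j ∈ Finset.univ.filter (fun j => i < j), f (x i - x j)

/-- The multiple hypergeometric series `Φ^{m,n}_N(a; x | b; c)`. -/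
noncomputable def Phi (f : ℂ → ℂ) (δ : ℂ) {m n : ℕ} (a x : Fin m → ℂ)
    (b c : Fin n → ℂ) (N : ℕ) : ℂ :=
  ∑ μ ∈ Finset.Nat.antidiagonalTuple m N,
    (Del f (fun i => x i + (μ i : ℂ) * δ) / Del f x)
      * (∏ i, ∏ j, sf f δ (x i - x j + a j) (μ i) / sf f δ (x i - x j + δ) (μ i))
      * (∏ i, ∏ k, sf f δ (x i + b k) (μ i) / sf f δ (x i + c k) (μ i))

/-- The `μ`-th summand of the very well-poised series `E^{m,n}(a; x | s; u; v)`. -/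
noncomputable def Eterm (f : ℂ → ℂ) (δ : ℂ) {m n : ℕ} (a x : Fin m → ℂ) (s : ℂ)
    (u v : Fin n → ℂ) (μ : Fin m → ℕ) : ℂ :=
  (Del f (fun i => x i + (μ i : ℂ) * δ) / Del f x)
    * (∏ i, f (x i + s + (((∑ j, μ j) + μ i : ℕ) : ℂ) * δ) / f (x i + s))
    * (∏ j, (sf f δ (s + x j) (∑ i, μ i) / sf f δ (δ + s + x j - a j) (∑ i, μ i))
        * ∏ i, sf f δ (x i - x j + a j) (μ i) / sf f δ (x i - x j + δ) (μ i))
    * (∏ k, (sf f δ (v k) (∑ i, μ i) / sf f δ (δ + s - u k) (∑ i, μ i))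
        * ∏ i, sf f δ (x i + u k) (μ i) / sf f δ (x i + δ + s - v k) (μ i))

/-- The very well-poised multiple series `E^{m,n}(a; x | s; u; v)`. -/
noncomputable def Evw (f : ℂ → ℂ) (δ : ℂ) {m n : ℕ} (a x : Fin m → ℂ) (s : ℂ)
    (u v : Fin n → ℂ) : ℂ :=
  ∑' μ : Fin m → ℕ, Eterm f δ a x s u v μ

/-- The one-dimensional very well-poised series `_{r+3}E_{r+2}(s; u_1, …, u_r)`. -/
noncomputable def E1 (f : ℂ → ℂ) (δ : ℂ) {r : ℕ} (s : ℂ) (u : Fin r → ℂ) : ℂ :=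
  ∑' k : ℕ, (f (s + 2 * (k : ℂ) * δ) / f s) * (sf f δ s k / sf f δ δ k)
    * ∏ i, sf f δ (u i) k / sf f δ (δ + s - u i) k


/-!
The transformation is the composition of two applications of a duality between balanced multiple
series in `x ∈ ℂ^ι` and in `y ∈ ℂ^κ` (`duality`): if `∑ x - ∑ p = ∑ y - ∑ q`, then
`Lsum f δ N x p y q = Lsum f δ N y q x p`, where `Lsum` is a sum over multi-indices of weight `N`
whose denominators in `x_i + y_k` have been cleared.

*Duality.* Translating all the `x_i` (and `p_i`) by a common `T` turns both sides into functions of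
`T` which are theta functions of the same type. At the points where some `x_i + y_k + T + lδ`
vanishes, most summands disappear and each side factors through a duality series of smaller order
(`Lsum_residue`), so that the two sides agree there by induction on `N`. The interpolation
formula `interpolation`, a consequence of the Riemann relation, says that a function of this type
which vanishes at all these points is zero, the balancing constant being generic.

*The very well-poised series.* Since `d₂ = -Nδ`, the series `E^{m,3}` is a sum over `|μ| ≤ N`.
Adjoining the variable `x_0 = -s - Nδ` and the index `μ_0 = N - |μ|` makes it, up to the explicit
constant `kap`, a duality series with `m + 1` variables on one side and the two variables
`δ + s - d₀`, `δ + s - d₁` on the other (`kap_mul_Evw`).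

*Symmetry.* The dual series, a sum over `ν₀ + ν₁ = N`, is invariant term by term under the passage
to the transformed parameters: it interchanges the factors belonging to `ν₀` and `ν₁`
(`Lsum_dual_symm`). Applying duality for the original and for the transformed parameters gives
the theorem for generic parameters (`bailey_generic`).

*Removing genericity.* The hypotheses of the theorem only exclude vanishing denominators. The
parameters are therefore moved along a complex line on which the generic points are dense, by
Baire's theorem, and both sides are continuous at the original point.
-/
/-! ### Zeros of the bracket and elliptic partial fractions -/

section Bracket

variable {f : ℂ → ℂ} {δ : ℂ}

lemma bracket_zero (hodd : ∀ t : ℂ, f (-t) = -f t) : f 0 = 0 := by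
  have h := hodd 0
  rw [neg_zero] at h
  have h2 : (2 : ℂ) * f 0 = 0 := by linear_combination h
  simpa using h2

lemma multiset_cons_of_card {w : Multiset ℂ} {n : ℕ} (h : w.card = n + 1) :
    ∃ c v, w = c ::ₘ v := by
  obtain ⟨c, hc⟩ := Multiset.card_pos_iff_exists_mem.mp (by omega : 0 < w.card)
  obtain ⟨v, hv⟩ := Multiset.exists_cons_of_mem hc
  exact ⟨c, v, hv⟩

/-- A nonzero entire function composed with a nonconstant affine map is nonzero on a dense set. -/
lemma dense_bracket_ne (hf : f ≠ 0) (hdiff : Differentiable ℂ f) (α β : ℂ) (hα : α ≠ 0) :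
    Dense {t : ℂ | f (α * t + β) ≠ 0} := by
  have hg : Differentiable ℂ (fun t : ℂ => f (α * t + β)) := by fun_prop
  rw [← interior_eq_empty_iff_dense_compl.trans (by rw [compl_compl] : _ ↔ Dense {t : ℂ | f (α * t + β) ≠ 0})]
  by_contra hne
  obtain ⟨t0, ht0⟩ := Set.nonempty_iff_ne_empty.mpr hne
  have hev : (fun t : ℂ => f (α * t + β)) =ᶠ[nhds t0] fun _ => 0 := by
    filter_upwards [mem_interior_iff_mem_nhds.mp ht0] with t ht
    simpa using ht
  have hA : AnalyticOnNhd ℂ (fun t : ℂ => f (α * t + β)) Set.univ :=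
    fun t _ => hg.analyticAt t
  have h0 := hA.eq_of_eventuallyEq (fun t _ => analyticAt_const) hev
  apply hf
  funext w
  have := congrFun h0 ((w - β) / α)
  rw [mul_div_cancel₀ _ hα, sub_add_cancel] at this
  simpa using this

/-- Expansion of `[ζ - w₁][ζ - w₂]` in the two products of the same shape vanishing at `z₁`
and at `z₂`: the Riemann relation recentred at `(w₁ + w₂) / 2`. -/
lemma riemann_expand (hodd : ∀ t : ℂ, f (-t) = -f t)
    (hRiem : ∀ x y u v : ℂ,
      f (x + y) * f (x - y) * f (u + v) * f (u - v) =
        f (x + u) * f (x - u) * f (y + v) * f (y - v)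
          - f (x + v) * f (x - v) * f (y + u) * f (y - u)) (z₁ z₂ w₁ w₂ ζ : ℂ) :
    f (z₁ - z₂) * f (z₁ + z₂ - w₁ - w₂) * (f (ζ - w₁) * f (ζ - w₂)) =
      f (z₁ - w₁) * f (z₁ - w₂) * (f (ζ - z₂) * f (ζ - (w₁ + w₂ - z₂)))
        - f (z₂ - w₁) * f (z₂ - w₂) * (f (ζ - z₁) * f (ζ - (w₁ + w₂ - z₁))) := by
  have h := hRiem (z₁ - (w₁ + w₂) / 2) (z₂ - (w₁ + w₂) / 2) (ζ - (w₁ + w₂) / 2) ((w₁ - w₂) / 2)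
  have h1 := hodd (ζ - z₁)
  have h2 := hodd (ζ - z₂)
  ring_nf at h h1 h2 ⊢
  rw [h1, h2] at h
  linear_combination h

/-- **Elliptic partial fractions**: if `z₁ + ⋯ + zₙ = w₁ + ⋯ + wₙ`, then
`∑ᵢ ∏ⱼ [zᵢ - wⱼ] / ∏_{j ≠ i} [zᵢ - zⱼ] = 0`. -/
lemma partial_fractions (hf : f ≠ 0) (hdiff : Differentiable ℂ f)
    (hodd : ∀ t : ℂ, f (-t) = -f t)
    (hRiem : ∀ x y u v : ℂ,
      f (x + y) * f (x - y) * f (u + v) * f (u - v) =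
        f (x + u) * f (x - u) * f (y + v) * f (y - v)
          - f (x + v) * f (x - v) * f (y + u) * f (y - u))
    {ι : Type*} [DecidableEq ι] (z : ι → ℂ) (n : ℕ) :
    ∀ (S : Finset ι) (w : Multiset ℂ), S.card = n → w.card = n → w.sum = ∑ i ∈ S, z i →
      (∀ i ∈ S, ∀ j ∈ S, i ≠ j → f (z i - z j) ≠ 0) →
      ∑ i ∈ S, (w.map fun c => f (z i - c)).prod * (∏ j ∈ S.erase i, f (z i - z j))⁻¹ = 0 := by
  have h0 := bracket_zero hodd
  induction n with
  | zero =>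
    intro S w hS _ _ _
    rw [Finset.card_eq_zero.mp hS]; simp
  | succ n ih =>
    -- a parameter `w` equal to a node `z k` removes that node from the sum
    have red : ∀ (S : Finset ι) (w : Multiset ℂ) (k : ι), S.card = n + 1 → k ∈ S →
        w.card = n → z k + w.sum = ∑ i ∈ S, z i →
        (∀ i ∈ S, ∀ j ∈ S, i ≠ j → f (z i - z j) ≠ 0) →
        ∑ i ∈ S, (f (z i - z k) * (w.map fun c => f (z i - c)).prod)
          * (∏ j ∈ S.erase i, f (z i - z j))⁻¹ = 0 := by
      intro S w k hS hk hw hsum hne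
      rw [← Finset.add_sum_erase S _ hk, sub_self, h0, zero_mul, zero_mul, zero_add]
      rw [← ih (S.erase k) w (by rw [Finset.card_erase_of_mem hk, hS]; rfl) hw
        (by rw [← Finset.add_sum_erase S _ hk] at hsum; exact add_left_cancel hsum)
        (fun i hi j hj => hne i (Finset.mem_of_mem_erase hi) j (Finset.mem_of_mem_erase hj))]
      refine Finset.sum_congr rfl fun i hi => ?_
      have hik : i ≠ k := Finset.ne_of_mem_erase hi
      have hki : k ∈ S.erase i := Finset.mem_erase.mpr ⟨hik.symm, hk⟩
      rw [← Finset.mul_prod_erase _ _ hki, Finset.erase_right_comm]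
      have := hne i (Finset.mem_of_mem_erase hi) k hk hik
      rw [mul_inv]
      field_simp
    intro S w hS hw hsum hne
    rcases n with _ | n
    · obtain ⟨k, rfl⟩ := Finset.card_eq_one.mp hS
      obtain ⟨c, rfl⟩ := Multiset.card_eq_one.mp hw
      simp only [Multiset.sum_singleton, Finset.sum_singleton] at hsum
      simp [hsum, h0]
    rcases n with _ | n
    · obtain ⟨k, l, hkl, rfl⟩ := Finset.card_eq_two.mp hS
      obtain ⟨c, d, rfl⟩ := Multiset.card_eq_two.mp hw
      have e1 : ({k, l} : Finset ι).erase k = {l} := by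
        ext i; simp only [Finset.mem_erase, Finset.mem_insert, Finset.mem_singleton]
        constructor
        · tauto
        · rintro rfl; exact ⟨hkl.symm, Or.inr rfl⟩
      have e2 : ({k, l} : Finset ι).erase l = {k} := by
        ext i; simp only [Finset.mem_erase, Finset.mem_insert, Finset.mem_singleton]
        constructor
        · tauto
        · rintro rfl; exact ⟨hkl, Or.inl rfl⟩
      rw [Finset.sum_pair hkl, e1, e2]
      simp only [Multiset.insert_eq_cons, Multiset.sum_cons, Multiset.sum_singleton,
        Finset.sum_pair hkl, Finset.prod_singleton, Multiset.map_cons, Multiset.map_singleton,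
        Multiset.prod_cons, Multiset.prod_singleton] at hsum ⊢
      have a1 : f (z l - c) = -f (z k - d) := by
        rw [← hodd]; congr 1; linear_combination -hsum
      have a2 : f (z l - d) = -f (z k - c) := by
        rw [← hodd]; congr 1; linear_combination -hsum
      have a3 : f (z l - z k) = -f (z k - z l) := by
        rw [← hodd]; congr 1; ring
      rw [a1, a2, a3, inv_neg]; ring
    · obtain ⟨w₁, w', rfl⟩ := multiset_cons_of_card hw
      rw [Multiset.card_cons, Nat.add_right_cancel_iff] at hw
      obtain ⟨w₂, w'', rfl⟩ := multiset_cons_of_card hw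
      rw [Multiset.card_cons, Nat.add_right_cancel_iff] at hw
      obtain ⟨w₃, v, rfl⟩ := multiset_cons_of_card hw
      rw [Multiset.card_cons, Nat.add_right_cancel_iff] at hw
      obtain ⟨k, hk, l, hl, hkl⟩ := Finset.one_lt_card.mp (by omega : 1 < S.card)
      -- perturb `w₁, w₃` in opposite directions to make `[z_k + z_l - w₁ - w₂]` nonzero
      let G : ℂ → ℂ := fun ε => ∑ i ∈ S,
        (f (z i - (w₁ + ε)) * (f (z i - w₂) * (f (z i - (w₃ - ε))
          * (v.map fun c => f (z i - c)).prod)))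
          * (∏ j ∈ S.erase i, f (z i - z j))⁻¹
      have hfc := hdiff.continuous
      have hG : Continuous G := by
        refine continuous_finsetSum _ fun i _ => ?_
        fun_prop
      have hG0 : G = fun _ => 0 := by
        refine hG.ext_on (dense_bracket_ne hf hdiff (-1) (z k + z l - w₁ - w₂) (by norm_num))
          continuous_const fun ε hε => ?_
        have hε' : f (z k + z l - (w₁ + ε) - w₂) ≠ 0 := by
          convert hε using 2; ring_nf
        have hkl' := hne k hk l hl hkl
        have key : (f (z k - z l) * f (z k + z l - (w₁ + ε) - w₂)) * G ε = 0 := by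
          have R1 := red S ((w₁ + ε + w₂ - z l) ::ₘ (w₃ - ε) ::ₘ v) l hS hl (by simp [hw])
            (by rw [← hsum]; simp only [Multiset.sum_cons]; ring) hne
          have R2 := red S ((w₁ + ε + w₂ - z k) ::ₘ (w₃ - ε) ::ₘ v) k hS hk (by simp [hw])
            (by rw [← hsum]; simp only [Multiset.sum_cons]; ring) hne
          have : (f (z k - z l) * f (z k + z l - (w₁ + ε) - w₂)) * G ε =
              f (z k - (w₁ + ε)) * f (z k - w₂) *
                ∑ i ∈ S, (f (z i - z l) * ((((w₁ + ε + w₂ - z l) ::ₘ (w₃ - ε) ::ₘ v).map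
                  fun c => f (z i - c)).prod)) * (∏ j ∈ S.erase i, f (z i - z j))⁻¹
              - f (z l - (w₁ + ε)) * f (z l - w₂) *
                ∑ i ∈ S, (f (z i - z k) * ((((w₁ + ε + w₂ - z k) ::ₘ (w₃ - ε) ::ₘ v).map
                  fun c => f (z i - c)).prod)) * (∏ j ∈ S.erase i, f (z i - z j))⁻¹ := by
            simp only [G, Finset.mul_sum]
            rw [← Finset.sum_sub_distrib]
            refine Finset.sum_congr rfl fun i _ => ?_
            simp only [Multiset.map_cons, Multiset.prod_cons]
            have E := riemann_expand hodd hRiem (z k) (z l) (w₁ + ε) w₂ (z i)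
            linear_combination (f (z i - (w₃ - ε)) * (v.map fun c => f (z i - c)).prod
              * (∏ j ∈ S.erase i, f (z i - z j))⁻¹) * E
          rw [this, R1, R2, mul_zero, mul_zero, sub_zero]
        rcases mul_eq_zero.mp key with h | h
        · exact absurd h (mul_ne_zero hkl' hε')
        · exact h
      have := congrFun hG0 0
      simpa [G] using this

/-- **Interpolation**: products `∏ [t - w]` of fixed degree and fixed sum of zeros `σ` are
determined, linearly, by their values at as many nodes `T` as the degree. -/
lemma interpolation (hf : f ≠ 0) (hdiff : Differentiable ℂ f)
    (hodd : ∀ t : ℂ, f (-t) = -f t)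
    (hRiem : ∀ x y u v : ℂ,
      f (x + y) * f (x - y) * f (u + v) * f (u - v) =
        f (x + u) * f (x - u) * f (y + v) * f (y - v)
          - f (x + v) * f (x - v) * f (y + u) * f (y - u))
    {τ : Type*} [Fintype τ] [DecidableEq τ] (T : τ → ℂ) (t σ : ℂ)
    (hT : ∀ i j, i ≠ j → f (T i - T j) ≠ 0) (ht : ∀ i, f (t - T i) ≠ 0)
    (hσ : f (σ - ∑ i, T i) ≠ 0) :
    ∃ C : τ → ℂ, ∀ w : τ → ℂ, ∑ i, w i = σ →
      ∏ i, f (t - w i) = ∑ k, C k * ∏ i, f (T k - w i) := by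
  classical
  let z : Option τ → ℂ := fun o => o.elim t T
  let w₀ : ℂ := t + ∑ i, T i - σ
  refine ⟨fun k => -(f (t - w₀) * (∏ j ∈ (univ : Finset (Option τ)).erase none, f (t - z j))⁻¹)⁻¹
    * (f (T k - w₀) * (∏ j ∈ (univ : Finset (Option τ)).erase (some k), f (T k - z j))⁻¹),
    fun w hw => ?_⟩
  have hne : ∀ i ∈ (univ : Finset (Option τ)), ∀ j ∈ (univ : Finset (Option τ)), i ≠ j →
      f (z i - z j) ≠ 0 := by
    rintro (_ | i) _ (_ | j) _ hij
    · exact absurd rfl hij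
    · exact ht j
    · have := ht i
      rw [← neg_sub, hodd, neg_ne_zero] at this
      exact this
    · exact hT i j fun h => hij (by rw [h])
  have key := partial_fractions hf hdiff hodd hRiem z (Fintype.card τ + 1) univ
    (w₀ ::ₘ (univ : Finset τ).val.map w) (by simp) (by simp)
    (by
      rw [Multiset.sum_cons]
      change w₀ + ∑ i, w i = _
      rw [hw, Fintype.sum_option]
      simp only [z, w₀, Option.elim]
      ring) hne
  rw [Fintype.sum_option] at key
  simp only [Multiset.map_cons, Multiset.prod_cons, Multiset.map_map, Function.comp_def] at key
  have hp : ∀ c : ℂ, (Multiset.map (fun i => f (c - w i)) (univ : Finset τ).val).prod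
      = ∏ i, f (c - w i) := fun c => rfl
  simp only [hp] at key
  have hz0 : z none = t := rfl
  have hzs : ∀ i, z (some i) = T i := fun i => rfl
  simp only [hz0, hzs] at key
  have hw0 : f (t - w₀) ≠ 0 := by
    convert hσ using 2; simp only [w₀]; ring
  have hP : (∏ j ∈ (univ : Finset (Option τ)).erase none, f (t - z j)) ≠ 0 :=
    Finset.prod_ne_zero_iff.mpr fun j hj =>
      hne none (mem_univ _) j (mem_univ _) (Finset.ne_of_mem_erase hj).symm
  simp only [mul_assoc, neg_mul, Finset.sum_neg_distrib]
  rw [← Finset.mul_sum]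
  have key2 : f (t - w₀) * (∏ j ∈ (univ : Finset (Option τ)).erase none, f (t - z j))⁻¹
      * ∏ i, f (t - w i) = -∑ k, (f (T k - w₀)
        * ((∏ j ∈ (univ : Finset (Option τ)).erase (some k), f (T k - z j))⁻¹
          * ∏ i, f (T k - w i))) := by
    rw [eq_neg_iff_add_eq_zero, ← key]
    congr 1
    · ring
    · refine Finset.sum_congr rfl fun k _ => by ring
  have hA : f (t - w₀) * (∏ j ∈ (univ : Finset (Option τ)).erase none, f (t - z j))⁻¹ ≠ 0 :=
    mul_ne_zero hw0 (inv_ne_zero hP)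
  rw [← mul_neg, ← key2, inv_mul_cancel_left₀ hA]

end Bracket

/-! ### The duality transformation in denominator-free form -/

section Duality

/-- The coefficient `∏_{i,j} [x_i - p_j]_{μ_i} / [x_i - x_j - μ_j δ]_{μ_i}`. Up to sign it is the
factor `Δ(x + μδ)/Δ(x) ∏_{i,j} [x_i - x_j + a_j]_{μ_i} / [x_i - x_j + δ]_{μ_i}`, `p_j = x_j - a_j`,
written without reference to an ordering of the index set. -/
noncomputable def cw (f : ℂ → ℂ) (δ : ℂ) {ι : Type*} [Fintype ι] (x p : ι → ℂ) (μ : ι → ℕ) : ℂ :=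
  ∏ i, ∏ j, sf f δ (x i - p j) (μ i) / sf f δ (x i - x j - (μ j : ℂ) * δ) (μ i)

/-- The product `∏_{i,k} [x_i + q_k]_{μ_i} / [x_i + y_k]_{μ_i}` multiplied by the common
denominator `∏_{i,k} [x_i + y_k]_N`; meaningful for `μ_i ≤ N`. -/
noncomputable def Pw (f : ℂ → ℂ) (δ : ℂ) {ι κ : Type*} [Fintype ι] [Fintype κ] (N : ℕ)
    (x : ι → ℂ) (y q : κ → ℂ) (μ : ι → ℕ) : ℂ :=
  ∏ i, ∏ k, ∏ r ∈ Finset.range N, f (x i + (if r < μ i then q k else y k) + (r : ℂ) * δ)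

/-- The series `Φ_N(a; x | q; y)`, `a = x - p`, multiplied by `∏_{i,k} [x_i + y_k]_N`
(and by the sign `(-1)^N`). -/
noncomputable def Lsum (f : ℂ → ℂ) (δ : ℂ) {ι κ : Type*} [Fintype ι] [DecidableEq ι] [Fintype κ]
    (N : ℕ) (x p : ι → ℂ) (y q : κ → ℂ) : ℂ :=
  ∑ μ ∈ Finset.piAntidiag (univ : Finset ι) N, cw f δ x p μ * Pw f δ N x y q μ

variable {f : ℂ → ℂ} {δ : ℂ}

lemma sf_add (z : ℂ) (m n : ℕ) : sf f δ z (m + n) = sf f δ z m * sf f δ (z + (m : ℂ) * δ) n := by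
  unfold sf
  rw [Finset.prod_range_add]
  congr 1
  refine Finset.prod_congr rfl fun r _ => ?_
  congr 1; push_cast; ring

lemma sf_zero (z : ℂ) : sf f δ z 0 = 1 := by simp [sf]

lemma sf_ne_zero {z : ℂ} {n : ℕ} (h : ∀ r : ℕ, r < n → f (z + (r : ℂ) * δ) ≠ 0) :
    sf f δ z n ≠ 0 :=
  Finset.prod_ne_zero_iff.mpr fun r hr => h r (Finset.mem_range.mp hr)

/-- Reversal of the order of the factors of a shifted factorial. -/
lemma sf_reflect (hodd : ∀ t : ℂ, f (-t) = -f t) (z w : ℂ) (n : ℕ)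
    (h : z + w + (n : ℂ) * δ = δ) : sf f δ z n = (-1) ^ n * sf f δ w n := by
  unfold sf
  rw [← Finset.prod_range_reflect (fun i => f (z + (i : ℂ) * δ)) n]
  have : ∀ r ∈ Finset.range n, f (z + ((n - 1 - r : ℕ) : ℂ) * δ) = (-1) * f (w + (r : ℂ) * δ) := by
    intro r hr
    have hr' := Finset.mem_range.mp hr
    rw [neg_one_mul, ← hodd]
    congr 1
    have e : ((n - 1 - r : ℕ) : ℂ) = (n : ℂ) - 1 - r := by
      rw [Nat.cast_sub (by omega), Nat.cast_sub (by omega)]; simp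
    rw [e]; linear_combination h
  rw [Finset.prod_congr rfl this, Finset.prod_mul_distrib]
  simp

/-- Moving a block of `L` factors past the end of a partial product. -/
lemma block_shift (c q y : ℂ) (n M L : ℕ) (hn : n ≤ M) :
    (∏ r ∈ Finset.range M, f (c + (if r < n then q else y) + (r : ℂ) * δ))
        * sf f δ (c + y + (M : ℂ) * δ) L
      = (∏ r ∈ Finset.range M,
          f (c + (if r < n then q else y + (L : ℂ) * δ) + (r : ℂ) * δ))
        * sf f δ (c + y + (n : ℂ) * δ) L := by
  obtain ⟨d, rfl⟩ := Nat.exists_eq_add_of_le hn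
  have split : ∀ y' : ℂ, (∏ r ∈ Finset.range (n + d),
      f (c + (if r < n then q else y') + (r : ℂ) * δ))
      = sf f δ (c + q) n * sf f δ (c + y' + (n : ℂ) * δ) d := by
    intro y'
    rw [Finset.prod_range_add]
    unfold sf
    congr 1
    · refine Finset.prod_congr rfl fun r hr => ?_
      rw [if_pos (Finset.mem_range.mp hr)]
    · refine Finset.prod_congr rfl fun r _ => ?_
      rw [if_neg (by omega)]
      congr 1; push_cast; ring
  rw [split, split]
  have e1 := sf_add (f := f) (δ := δ) (c + y + (n : ℂ) * δ) d L
  have e2 := sf_add (f := f) (δ := δ) (c + y + (n : ℂ) * δ) L d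
  rw [Nat.add_comm d L, e2] at e1
  have e3 : c + y + (n : ℂ) * δ + (d : ℂ) * δ = c + y + ((n + d : ℕ) : ℂ) * δ := by
    push_cast; ring
  have e4 : c + (y + (L : ℂ) * δ) + (n : ℂ) * δ = c + y + (n : ℂ) * δ + (L : ℂ) * δ := by ring
  rw [e3] at e1
  rw [e4]
  linear_combination -(sf f δ (c + q) n) * e1

section Residue

variable {ι κ : Type*} [Fintype ι] [DecidableEq ι] [Fintype κ] [DecidableEq κ]

/-- `cw` after `L` forced steps in the direction `i₀`. -/
lemma cw_step (x p : ι → ℂ) (i₀ : ι) (L : ℕ) (ν : ι → ℕ) :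
    cw f δ x p (fun i => ν i + if i = i₀ then L else 0)
      = cw f δ (Function.update x i₀ (x i₀ + (L : ℂ) * δ)) p ν
        * ∏ j, sf f δ (x i₀ - p j) L
          / sf f δ (x i₀ - x j - ((ν j + if j = i₀ then L else 0 : ℕ) : ℂ) * δ) L := by
  have hX : ∀ j, x j + ((ν j + if j = i₀ then L else 0 : ℕ) : ℂ) * δ
      = Function.update x i₀ (x i₀ + (L : ℂ) * δ) j + (ν j : ℂ) * δ := by
    intro j
    by_cases h : j = i₀
    · subst h; simp; ring
    · simp [h]
  have hs : ∀ (i : ι) (c : ℂ), sf f δ (x i - c) (ν i + if i = i₀ then L else 0)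
      = sf f δ (Function.update x i₀ (x i₀ + (L : ℂ) * δ) i - c) (ν i)
        * if i = i₀ then sf f δ (x i₀ - c) L else 1 := by
    intro i c
    by_cases h : i = i₀
    · subst h
      rw [if_pos rfl, if_pos rfl, Function.update_self, Nat.add_comm, sf_add, mul_comm]
      congr 2; ring
    · rw [if_neg h, if_neg h, Function.update_of_ne h]; simp
  unfold cw
  have : ∀ i j, sf f δ (x i - p j) (ν i + if i = i₀ then L else 0)
      / sf f δ (x i - x j - ((ν j + if j = i₀ then L else 0 : ℕ) : ℂ) * δ)
          (ν i + if i = i₀ then L else 0)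
      = sf f δ (Function.update x i₀ (x i₀ + (L : ℂ) * δ) i - p j) (ν i)
        / sf f δ (Function.update x i₀ (x i₀ + (L : ℂ) * δ) i
            - Function.update x i₀ (x i₀ + (L : ℂ) * δ) j - (ν j : ℂ) * δ) (ν i)
        * if i = i₀ then sf f δ (x i₀ - p j) L
          / sf f δ (x i₀ - x j - ((ν j + if j = i₀ then L else 0 : ℕ) : ℂ) * δ) L else 1 := by
    intro i j
    rw [sub_sub (x i), sub_sub (x i₀), hs, hs, sub_sub, ← hX, mul_div_mul_comm]
    by_cases h : i = i₀ <;> simp [h]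
  simp only [this, Finset.prod_mul_distrib]
  congr 1
  rw [Finset.prod_comm]
  simp

/-- `Pw` after `L` forced steps in the direction `i₀`, compared with the same product for the
parameters in which both `x_{i₀}` and `y_{k₀}` are raised by `L δ`. -/
lemma Pw_step (x : ι → ℂ) (y q : κ → ℂ) (i₀ : ι) (k₀ : κ) (L M : ℕ) (ν : ι → ℕ)
    (hν : ∀ i, ν i ≤ M) :
    Pw f δ (M + L) x y q (fun i => ν i + if i = i₀ then L else 0)
        * sf f δ (x i₀ + (L : ℂ) * δ + y k₀ + (M : ℂ) * δ) L
      = Pw f δ M (Function.update x i₀ (x i₀ + (L : ℂ) * δ))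
          (Function.update y k₀ (y k₀ + (L : ℂ) * δ)) q ν
        * (∏ k, sf f δ (x i₀ + q k) L)
        * (∏ i, sf f δ (x i + ((ν i + if i = i₀ then L else 0 : ℕ) : ℂ) * δ + y k₀) L)
        * ∏ i, ∏ k, if i ≠ i₀ ∧ k ≠ k₀ then sf f δ (x i + y k + (M : ℂ) * δ) L else 1 := by
  have key : ∀ i k,
      (∏ r ∈ Finset.range (M + L), f (x i + (if r < ν i + (if i = i₀ then L else 0)
          then q k else y k) + (r : ℂ) * δ))
        * (if i = i₀ then if k = k₀ then
            sf f δ (x i₀ + (L : ℂ) * δ + y k₀ + (M : ℂ) * δ) L else 1 else 1)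
      = (∏ r ∈ Finset.range M, f (Function.update x i₀ (x i₀ + (L : ℂ) * δ) i
          + (if r < ν i then q k else Function.update y k₀ (y k₀ + (L : ℂ) * δ) k)
          + (r : ℂ) * δ))
        * (if i = i₀ then sf f δ (x i₀ + q k) L else 1)
        * (if k = k₀ then
            sf f δ (x i + ((ν i + if i = i₀ then L else 0 : ℕ) : ℂ) * δ + y k₀) L else 1)
        * (if i ≠ i₀ ∧ k ≠ k₀ then sf f δ (x i + y k + (M : ℂ) * δ) L else 1) := by
    intro i k
    by_cases hi : i = i₀
    · subst hi
      have e : (∏ r ∈ Finset.range (M + L), f (x i + (if r < ν i + L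
          then q k else y k) + (r : ℂ) * δ))
          = sf f δ (x i + q k) L * ∏ r ∈ Finset.range M,
            f (x i + (L : ℂ) * δ + (if r < ν i then q k else y k) + (r : ℂ) * δ) := by
        rw [Nat.add_comm, Finset.prod_range_add]
        unfold sf
        congr 1
        · refine Finset.prod_congr rfl fun r hr => ?_
          have := Finset.mem_range.mp hr
          rw [if_pos (by omega)]
        · refine Finset.prod_congr rfl fun r _ => ?_
          have : (L + r < ν i + L) ↔ r < ν i := by omega
          simp only [this]
          congr 1; push_cast; ring
      simp only [if_true, Function.update_self, e]
      by_cases hk : k = k₀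
      · subst hk
        have B := block_shift (f := f) (δ := δ) (x i + (L : ℂ) * δ) (q k) (y k) (ν i) M L (hν i)
        have e2 : x i + ((ν i + L : ℕ) : ℂ) * δ + y k
            = x i + (L : ℂ) * δ + y k + (ν i : ℂ) * δ := by push_cast; ring
        simp only [if_true, Function.update_self, ne_eq, not_true, false_and, if_false, e2]
        linear_combination (sf f δ (x i + q k) L) * B
      · simp [hk, mul_comm]
    · simp only [hi, if_false, Function.update_of_ne (Ne.symm (Ne.symm hi)), add_zero]
      have e : (∏ r ∈ Finset.range (M + L), f (x i + (if r < ν i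
          then q k else y k) + (r : ℂ) * δ))
          = (∏ r ∈ Finset.range M, f (x i + (if r < ν i then q k else y k) + (r : ℂ) * δ))
            * sf f δ (x i + y k + (M : ℂ) * δ) L := by
        rw [Finset.prod_range_add]
        congr 1
        unfold sf
        refine Finset.prod_congr rfl fun r _ => ?_
        have := hν i
        rw [if_neg (by omega)]
        congr 1; push_cast; ring
      rw [e]
      by_cases hk : k = k₀
      · subst hk
        have B := block_shift (f := f) (δ := δ) (x i) (q k) (y k) (ν i) M L (hν i)
        have e2 : x i + (ν i : ℂ) * δ + y k = x i + y k + (ν i : ℂ) * δ := by ring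
        simp only [if_true, Function.update_self, ne_eq, not_true, and_false, if_false, e2, B]
        ring
      · simp [hk, hi]
  have key2 := Finset.prod_congr (rfl : (univ : Finset ι) = univ) fun i _ =>
    Finset.prod_congr (rfl : (univ : Finset κ) = univ) fun k _ => key i k
  simp only [Finset.prod_mul_distrib] at key2
  unfold Pw
  convert key2 using 2
  · simp
  · congr 1
    · rw [Finset.prod_comm (f := fun i k => if i = i₀ then sf f δ (x i₀ + q k) L else 1)]
      simp
    · simp

/-- At a common zero `x_{i₀} + y_{k₀} + l δ = 0` of the cleared denominators, `Lsum` of order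
`M + l + 1` factors through `Lsum` of order `M`, with `x_{i₀}` and `y_{k₀}` raised by
`(l + 1) δ`; here `L = l + 1`. -/
lemma Lsum_residue (hodd : ∀ t : ℂ, f (-t) = -f t)
    (hδ : ∀ k : ℤ, k ≠ 0 → f ((k : ℂ) * δ) ≠ 0)
    (x p : ι → ℂ) (y q : κ → ℂ) (i₀ : ι) (k₀ : κ) (L M : ℕ)
    (hxy : x i₀ + y k₀ + (L : ℂ) * δ = δ) (hL : 0 < L)
    (hx : ∀ j, j ≠ i₀ → ∀ z : ℤ, f (x j - x i₀ + (z : ℂ) * δ) ≠ 0) :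
    Lsum f δ (M + L) x p y q * sf f δ (δ + (M : ℂ) * δ) L
      = ((-1) ^ L) ^ (Fintype.card ι) * (∏ j, sf f δ (x i₀ - p j) L)
        * (∏ k, sf f δ (x i₀ + q k) L)
        * (∏ i, ∏ k, if i ≠ i₀ ∧ k ≠ k₀ then sf f δ (x i + y k + (M : ℂ) * δ) L else 1)
        * Lsum f δ M (Function.update x i₀ (x i₀ + (L : ℂ) * δ)) p
            (Function.update y k₀ (y k₀ + (L : ℂ) * δ)) q := by
  have h0 := bracket_zero hodd
  -- only the multi-indices with `μ i₀ ≥ L` contribute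
  have hsum : Lsum f δ (M + L) x p y q
      = ∑ ν ∈ Finset.piAntidiag (univ : Finset ι) M,
          cw f δ x p (fun i => ν i + if i = i₀ then L else 0)
            * Pw f δ (M + L) x y q (fun i => ν i + if i = i₀ then L else 0) := by
    unfold Lsum
    symm
    refine Finset.sum_of_injOn (fun ν : ι → ℕ => fun i => ν i + if i = i₀ then L else 0)
      ?_ ?_ ?_ ?_
    · intro ν _ ν' _ h
      funext i
      have := congrFun h i
      simpa using this
    · intro ν hν
      simp only [Finset.mem_coe, Finset.mem_piAntidiag] at hν ⊢
      refine ⟨?_, fun i _ => mem_univ i⟩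
      rw [Finset.sum_add_distrib, hν.1]; simp
    · intro μ hμ hnot
      have hlt : μ i₀ < L := by
        by_contra hge
        apply hnot
        refine ⟨fun i => μ i - if i = i₀ then L else 0, ?_, ?_⟩
        · simp only [Finset.mem_coe, Finset.mem_piAntidiag] at hμ ⊢
          refine ⟨?_, fun i _ => mem_univ i⟩
          have h1 : ∑ i, ((μ i - if i = i₀ then L else 0) + if i = i₀ then L else 0)
              = ∑ i, μ i := by
            refine Finset.sum_congr rfl fun i _ => ?_
            by_cases h : i = i₀
            · subst h; simp; omega
            · simp [h]
          rw [Finset.sum_add_distrib, hμ.1] at h1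
          simp at h1
          exact h1
        · funext i
          by_cases h : i = i₀
          · subst h; simp; omega
          · simp [h]
      have : Pw f δ (M + L) x y q μ = 0 := by
        unfold Pw
        refine Finset.prod_eq_zero (mem_univ i₀) (Finset.prod_eq_zero (mem_univ k₀)
          (Finset.prod_eq_zero (i := L - 1) (Finset.mem_range.mpr (by omega)) ?_))
        rw [if_neg (by omega), ← h0]
        congr 1
        rw [Nat.cast_sub hL]
        push_cast
        linear_combination hxy
      rw [this, mul_zero]
    · intro ν _; rfl
  rw [hsum, Finset.sum_mul]
  unfold Lsum
  rw [Finset.mul_sum]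
  refine Finset.sum_congr rfl fun ν hν => ?_
  have hνM : ∀ i, ν i ≤ M := by
    intro i
    rw [← (Finset.mem_piAntidiag.mp hν).1]
    exact Finset.single_le_sum (f := ν) (fun _ _ => Nat.zero_le _) (mem_univ i)
  have hP := Pw_step (f := f) (δ := δ) x y q i₀ k₀ L M ν hνM
  have e1 : x i₀ + (L : ℂ) * δ + y k₀ + (M : ℂ) * δ = δ + (M : ℂ) * δ := by
    linear_combination hxy
  rw [e1] at hP
  rw [cw_step, mul_assoc, hP]
  -- the denominators of `cw` cancel against factors released by `Pw`
  have hcancel : (∏ j, sf f δ (x i₀ - p j) L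
        / sf f δ (x i₀ - x j - ((ν j + if j = i₀ then L else 0 : ℕ) : ℂ) * δ) L)
      * (∏ i, sf f δ (x i + ((ν i + if i = i₀ then L else 0 : ℕ) : ℂ) * δ + y k₀) L)
      = ((-1) ^ L) ^ (Fintype.card ι) * ∏ j, sf f δ (x i₀ - p j) L := by
    rw [← Finset.prod_mul_distrib]
    have : ∀ j, sf f δ (x i₀ - p j) L
        / sf f δ (x i₀ - x j - ((ν j + if j = i₀ then L else 0 : ℕ) : ℂ) * δ) L
        * sf f δ (x j + ((ν j + if j = i₀ then L else 0 : ℕ) : ℂ) * δ + y k₀) L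
        = (-1) ^ L * sf f δ (x i₀ - p j) L := by
      intro j
      have hr := sf_reflect (f := f) (δ := δ) hodd
        (x i₀ - x j - ((ν j + if j = i₀ then L else 0 : ℕ) : ℂ) * δ)
        (x j + ((ν j + if j = i₀ then L else 0 : ℕ) : ℂ) * δ + y k₀) L
        (by linear_combination hxy)
      have hne : sf f δ (x j + ((ν j + if j = i₀ then L else 0 : ℕ) : ℂ) * δ + y k₀) L ≠ 0 := by
        refine sf_ne_zero fun r hr => ?_
        by_cases hj : j = i₀
        · subst hj
          have := hδ ((ν j + r + 1 : ℕ) : ℤ) (by omega)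
          convert this using 2
          simp only [if_true]
          push_cast
          linear_combination hxy
        · have := hx j hj (ν j + 1 - L + r)
          convert this using 2
          simp only [hj, if_false]
          push_cast
          linear_combination hxy
      rw [hr, div_mul_eq_mul_div, div_eq_iff
        (mul_ne_zero (pow_ne_zero _ (by norm_num)) hne)]
      have hs : ((-1 : ℂ) ^ L) * (-1) ^ L = 1 := by
        rw [← mul_pow]; norm_num
      linear_combination -(sf f δ (x i₀ - p j) L
        * sf f δ (x j + ((ν j + if j = i₀ then L else 0 : ℕ) : ℂ) * δ + y k₀) L) * hs
    rw [Finset.prod_congr rfl fun j _ => this j, Finset.prod_mul_distrib]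
    simp
  linear_combination (cw f δ (Function.update x i₀ (x i₀ + (L : ℂ) * δ)) p ν
    * Pw f δ M (Function.update x i₀ (x i₀ + (L : ℂ) * δ))
          (Function.update y k₀ (y k₀ + (L : ℂ) * δ)) q ν
    * (∏ k, sf f δ (x i₀ + q k) L)
    * ∏ i, ∏ k, if i ≠ i₀ ∧ k ≠ k₀ then sf f δ (x i + y k + (M : ℂ) * δ) L else 1) * hcancel

lemma Lsum_shift_left (N : ℕ) (x p : ι → ℂ) (y q : κ → ℂ) (t : ℂ) :
    Lsum f δ N (fun i => x i + t) (fun i => p i + t) y q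
      = ∑ μ ∈ Finset.piAntidiag (univ : Finset ι) N, cw f δ x p μ
        * ∏ e : ι × κ × Fin N, f (t - -(x e.1 + (if (e.2.2 : ℕ) < μ e.1 then q e.2.1 else y e.2.1)
            + ((e.2.2 : ℕ) : ℂ) * δ)) := by
  unfold Lsum
  refine Finset.sum_congr rfl fun μ _ => ?_
  congr 1
  · unfold cw
    simp only [add_sub_add_right_eq_sub]
  · unfold Pw
    simp only [Fintype.prod_prod_type, Finset.prod_range]
    refine Finset.prod_congr rfl fun i _ => Finset.prod_congr rfl fun k _ =>
      Finset.prod_congr rfl fun r _ => ?_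
    congr 1; ring

lemma Lsum_shift_right (N : ℕ) (x p : ι → ℂ) (y q : κ → ℂ) (t : ℂ) :
    Lsum f δ N y q (fun i => x i + t) (fun i => p i + t)
      = ∑ μ ∈ Finset.piAntidiag (univ : Finset κ) N, cw f δ y q μ
        * ∏ e : ι × κ × Fin N, f (t - -(y e.2.1 + (if (e.2.2 : ℕ) < μ e.2.1 then p e.1 else x e.1)
            + ((e.2.2 : ℕ) : ℂ) * δ)) := by
  unfold Lsum
  refine Finset.sum_congr rfl fun μ _ => ?_
  congr 1
  unfold Pw
  simp only [Fintype.prod_prod_type, Finset.prod_range]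
  rw [Finset.prod_comm]
  refine Finset.prod_congr rfl fun i _ => Finset.prod_congr rfl fun k _ =>
    Finset.prod_congr rfl fun r _ => ?_
  congr 1
  split_ifs <;> ring

/-- The sum of the zeros of every term of the series, as functions of the common translation. -/
lemma sum_zeros {ι κ : Type*} [Fintype ι] [DecidableEq ι] [Fintype κ]
    (N : ℕ) (x : ι → ℂ) (y q : κ → ℂ) (μ : ι → ℕ)
    (hμ : μ ∈ Finset.piAntidiag (univ : Finset ι) N) :
    ∑ i, ∑ k, ∑ r : Fin N, -(x i + (if (r : ℕ) < μ i then q k else y k) + ((r : ℕ) : ℂ) * δ)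
      = (∑ i, ∑ k, ∑ r : Fin N, -(x i + y k + ((r : ℕ) : ℂ) * δ))
        + (N : ℂ) * (∑ k, y k - ∑ k, q k) := by
  have hsum := (Finset.mem_piAntidiag.mp hμ).1
  have hle : ∀ i, μ i ≤ N := by
    intro i
    rw [← hsum]
    exact Finset.single_le_sum (f := μ) (fun _ _ => Nat.zero_le _) (mem_univ i)
  have : ∀ i k, ∑ r : Fin N, -(x i + (if (r : ℕ) < μ i then q k else y k) + ((r : ℕ) : ℂ) * δ)
      = (∑ r : Fin N, -(x i + y k + ((r : ℕ) : ℂ) * δ)) + (μ i : ℂ) * (y k - q k) := by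
    intro i k
    have e : ∀ r : Fin N, -(x i + (if (r : ℕ) < μ i then q k else y k) + ((r : ℕ) : ℂ) * δ)
        = -(x i + y k + ((r : ℕ) : ℂ) * δ) + if (r : ℕ) < μ i then y k - q k else 0 := by
      intro r; split_ifs <;> ring
    rw [Finset.sum_congr rfl fun r _ => e r, Finset.sum_add_distrib]
    congr 1
    rw [← Finset.sum_range (fun r => if r < μ i then y k - q k else 0), ← Finset.sum_filter]
    have : (Finset.range N).filter (fun r => r < μ i) = Finset.range (μ i) := by
      ext r; simp only [Finset.mem_filter, Finset.mem_range]; have := hle i; omega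
    rw [this]; simp; ring
  simp only [this, Finset.sum_add_distrib]
  congr 1
  simp only [← Finset.mul_sum, Finset.sum_sub_distrib]
  rw [← Finset.sum_mul, ← hsum]
  push_cast
  rfl

/-- **Duality transformation** for generic parameters. Translating all `x_i`, `p_i` by `t`, both
sides become combinations of products of brackets of the same degree with the same sum of zeros;
they agree at all common zeros of the denominators by induction on `N`, hence everywhere. -/
theorem duality (hf : f ≠ 0) (hdiff : Differentiable ℂ f)
    (hodd : ∀ t : ℂ, f (-t) = -f t)
    (hRiem : ∀ x y u v : ℂ,
      f (x + y) * f (x - y) * f (u + v) * f (u - v) =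
        f (x + u) * f (x - u) * f (y + v) * f (y - v)
          - f (x + v) * f (x - v) * f (y + u) * f (y - u))
    (hδ : ∀ k : ℤ, k ≠ 0 → f ((k : ℂ) * δ) ≠ 0) (N : ℕ) :
    ∀ (x p : ι → ℂ) (y q : κ → ℂ), ∑ i, x i - ∑ i, p i = ∑ k, y k - ∑ k, q k →
      (∀ i j k l, ¬(i = j ∧ k = l) → ∀ z : ℤ, f (x i - x j + (y k - y l) + (z : ℂ) * δ) ≠ 0) →
      (∀ i k, ∀ r : ℕ, f (x i + y k + (r : ℂ) * δ) ≠ 0) →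
      (∀ r : ℕ, r ≠ 0 → ∀ z : ℤ, f ((r : ℂ) * (∑ i, x i - ∑ i, p i) + (z : ℂ) * δ) ≠ 0) →
      Lsum f δ N x p y q = Lsum f δ N y q x p := by
  induction N using Nat.strong_induction_on with
  | _ N ih =>
  intro x p y q hbal hC hD hE
  rcases Nat.eq_zero_or_pos N with rfl | hN
  · simp [Lsum, cw, Pw, sf]
  have hres : ∀ (i₀ : ι) (k₀ : κ) (l : ℕ), l < N →
      Lsum f δ N (fun i => x i + -(x i₀ + y k₀ + (l : ℂ) * δ))
        (fun i => p i + -(x i₀ + y k₀ + (l : ℂ) * δ)) y q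
      = Lsum f δ N y q (fun i => x i + -(x i₀ + y k₀ + (l : ℂ) * δ))
        (fun i => p i + -(x i₀ + y k₀ + (l : ℂ) * δ)) := by
    intro i₀ k₀ l hl
    obtain ⟨M, rfl⟩ : ∃ M, N = M + (l + 1) := ⟨N - (l + 1), by omega⟩
    set T : ℂ := -(x i₀ + y k₀ + (l : ℂ) * δ) with hT
    have hZ : sf f δ (δ + (M : ℂ) * δ) (l + 1) ≠ 0 := by
      refine sf_ne_zero fun r _ => ?_
      have := hδ ((M + r + 1 : ℕ) : ℤ) (by omega)
      convert this using 2
      push_cast; ring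
    have hxy : x i₀ + T + y k₀ + ((l + 1 : ℕ) : ℂ) * δ = δ := by
      rw [hT]; push_cast; ring
    have hA : ∀ j, j ≠ i₀ → ∀ z : ℤ, f ((x j + T) - (x i₀ + T) + (z : ℂ) * δ) ≠ 0 := by
      intro j hj z
      have := hC j i₀ k₀ k₀ (fun h => hj h.1) z
      convert this using 2; ring
    have hB : ∀ k, k ≠ k₀ → ∀ z : ℤ, f (y k - y k₀ + (z : ℂ) * δ) ≠ 0 := by
      intro k hk z
      have := hC i₀ i₀ k k₀ (fun h => hk h.2) z
      convert this using 2; ring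
    have R1 := Lsum_residue hodd hδ (fun i => x i + T) (fun i => p i + T) y q i₀ k₀ (l + 1) M
      hxy (by omega) hA
    have R2 := Lsum_residue hodd hδ y q (fun i => x i + T) (fun i => p i + T) k₀ i₀ (l + 1) M
      (by linear_combination hxy) (by omega) hB
    refine mul_right_cancel₀ hZ ?_
    rw [R1, R2]
    -- the lower-order series agree by the induction hypothesis
    have hIH := ih M (by omega)
      (Function.update (fun i => x i + T) i₀ (x i₀ + T + ((l + 1 : ℕ) : ℂ) * δ))
      (fun i => p i + T) (Function.update y k₀ (y k₀ + ((l + 1 : ℕ) : ℂ) * δ)) q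
    have hux : ∀ i, Function.update (fun i => x i + T) i₀ (x i₀ + T + ((l + 1 : ℕ) : ℂ) * δ) i
        = x i + T + ((if i = i₀ then l + 1 else 0 : ℕ) : ℂ) * δ := by
      intro i
      by_cases h : i = i₀
      · subst h; simp
      · simp [h]
    have huy : ∀ k, Function.update y k₀ (y k₀ + ((l + 1 : ℕ) : ℂ) * δ) k
        = y k + ((if k = k₀ then l + 1 else 0 : ℕ) : ℂ) * δ := by
      intro k
      by_cases h : k = k₀
      · subst h; simp
      · simp [h]
    have hsx : ∑ i, (x i + T + ((if i = i₀ then l + 1 else 0 : ℕ) : ℂ) * δ) - ∑ i, (p i + T)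
        = ∑ i, x i - ∑ i, p i + ((l + 1 : ℕ) : ℂ) * δ := by
      simp only [Finset.sum_add_distrib, ← Finset.sum_mul, ← Nat.cast_sum]
      simp only [Finset.sum_ite_eq', mem_univ, if_true]
      ring
    have hsy : ∑ k, (y k + ((if k = k₀ then l + 1 else 0 : ℕ) : ℂ) * δ) - ∑ k, q k
        = ∑ k, y k - ∑ k, q k + ((l + 1 : ℕ) : ℂ) * δ := by
      simp only [Finset.sum_add_distrib, ← Finset.sum_mul, ← Nat.cast_sum]
      simp only [Finset.sum_ite_eq', mem_univ, if_true]
      ring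
    simp only [hux, huy, hsx, hsy] at hIH
    have hIH' := hIH (by rw [hbal])
      (by
        intro i j k k' hne z
        have := hC i j k k' hne (z + (if i = i₀ then l + 1 else 0 : ℕ)
          - (if j = i₀ then l + 1 else 0 : ℕ) + (if k = k₀ then l + 1 else 0 : ℕ)
          - (if k' = k₀ then l + 1 else 0 : ℕ))
        convert this using 2
        push_cast; ring)
      (by
        intro i k r
        by_cases hik : i = i₀ ∧ k = k₀
        · obtain ⟨rfl, rfl⟩ := hik
          have := hδ ((l + 2 + r : ℕ) : ℤ) (by omega)
          convert this using 2
          simp only [if_true]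
          push_cast
          push_cast at hxy
          linear_combination hxy
        · have := hC i i₀ k k₀ hik (r - l + (if i = i₀ then l + 1 else 0 : ℕ)
            + (if k = k₀ then l + 1 else 0 : ℕ))
          convert this using 2
          rw [hT]
          push_cast; ring)
      (by
        intro r hr z
        have := hE r hr (z + r * (l + 1))
        convert this using 2
        push_cast; ring)
    have hfx : Function.update (fun i => x i + T) i₀ (x i₀ + T + ((l + 1 : ℕ) : ℂ) * δ)
        = fun i => x i + T + ((if i = i₀ then l + 1 else 0 : ℕ) : ℂ) * δ := funext hux
    have hfy : Function.update y k₀ (y k₀ + ((l + 1 : ℕ) : ℂ) * δ)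
        = fun k => y k + ((if k = k₀ then l + 1 else 0 : ℕ) : ℂ) * δ := funext huy
    rw [hIH', hfx, hfy]
    congr 1
    -- the prefactors agree by reversing the order of factors
    have r1 : ∀ j, sf f δ (x i₀ + T - (p j + T)) (l + 1)
        = (-1) ^ (l + 1) * sf f δ (y k₀ + (p j + T)) (l + 1) := fun j =>
      sf_reflect hodd _ _ _ (by linear_combination hxy)
    have r2 : ∀ k, sf f δ (x i₀ + T + q k) (l + 1)
        = (-1) ^ (l + 1) * sf f δ (y k₀ - q k) (l + 1) := fun k =>
      sf_reflect hodd _ _ _ (by linear_combination hxy)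
    have r3 : (∏ i, ∏ k, if i ≠ i₀ ∧ k ≠ k₀ then
        sf f δ (x i + T + y k + (M : ℂ) * δ) (l + 1) else 1)
        = ∏ k, ∏ i, if k ≠ k₀ ∧ i ≠ i₀ then
        sf f δ (y k + (x i + T) + (M : ℂ) * δ) (l + 1) else 1 := by
      rw [Finset.prod_comm]
      refine Finset.prod_congr rfl fun k _ => Finset.prod_congr rfl fun i _ => ?_
      have e : y k + (x i + T) = x i + T + y k := by ring
      rw [e]
      exact if_congr and_comm rfl rfl
    rw [r3]
    congr 1
    simp only [r1, r2, Finset.prod_mul_distrib, Finset.prod_const, Finset.card_univ]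
    have hs : (((-1 : ℂ) ^ (l + 1)) ^ Fintype.card ι) * ((-1 : ℂ) ^ (l + 1)) ^ Fintype.card ι
        = 1 := by
      rw [← mul_pow, ← mul_pow]; norm_num
    linear_combination (((-1 : ℂ) ^ (l + 1)) ^ Fintype.card κ
      * (∏ j, sf f δ (y k₀ + (p j + T)) (l + 1)) * ∏ k, sf f δ (y k₀ - q k) (l + 1)) * hs
  -- interpolation at the points where some `[x_i + y_k + r δ + t]`, `r < N`, vanishes
  let Tn : ι × κ × Fin N → ℂ := fun e => -(x e.1 + y e.2.1 + ((e.2.2 : ℕ) : ℂ) * δ)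
  have hTsum : ∑ e, Tn e = ∑ i, ∑ k, ∑ r : Fin N, -(x i + y k + ((r : ℕ) : ℂ) * δ) := by
    simp only [Tn, Fintype.sum_prod_type]
  obtain ⟨C, hCint⟩ := interpolation hf hdiff hodd hRiem Tn 0
    (∑ e, Tn e + (N : ℂ) * (∑ i, x i - ∑ i, p i))
    (by
      rintro ⟨i, k, r⟩ ⟨j, l, r'⟩ hne
      by_cases h : i = j ∧ k = l
      · obtain ⟨rfl, rfl⟩ := h
        have hr : (r : ℕ) ≠ r' := fun h => hne (by rw [Fin.ext h])
        have := hδ ((r' : ℤ) - r) (by omega)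
        convert this using 2
        simp only [Tn]; push_cast; ring
      · have := hC j i l k (fun h' => h ⟨h'.1.symm, h'.2.symm⟩) (r' - r)
        convert this using 2
        simp only [Tn]; push_cast; ring)
    (by
      rintro ⟨i, k, r⟩
      have := hD i k r
      convert this using 2
      simp only [Tn]; ring)
    (by
      have := hE N (by omega) 0
      convert this using 2
      push_cast; ring)
  have e1 := Lsum_shift_left (f := f) (δ := δ) N x p y q 0
  have e2 := Lsum_shift_right (f := f) (δ := δ) N x p y q 0
  simp only [add_zero] at e1 e2
  have hw1 : ∀ μ ∈ Finset.piAntidiag (univ : Finset ι) N,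
      ∑ e : ι × κ × Fin N, -(x e.1 + (if (e.2.2 : ℕ) < μ e.1 then q e.2.1 else y e.2.1)
            + ((e.2.2 : ℕ) : ℂ) * δ) = ∑ e, Tn e + (N : ℂ) * (∑ i, x i - ∑ i, p i) := by
    intro μ hμ
    rw [hTsum, hbal, ← sum_zeros N x y q μ hμ]
    simp only [Fintype.sum_prod_type]
  have hw2 : ∀ μ ∈ Finset.piAntidiag (univ : Finset κ) N,
      ∑ e : ι × κ × Fin N, -(y e.2.1 + (if (e.2.2 : ℕ) < μ e.2.1 then p e.1 else x e.1)
            + ((e.2.2 : ℕ) : ℂ) * δ) = ∑ e, Tn e + (N : ℂ) * (∑ i, x i - ∑ i, p i) := by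
    intro μ hμ
    have h := sum_zeros (δ := δ) N y x p μ hμ
    have h' : ∑ e, Tn e = ∑ k, ∑ i, ∑ r : Fin N, -(y k + x i + ((r : ℕ) : ℂ) * δ) := by
      rw [hTsum, Finset.sum_comm]
      refine Finset.sum_congr rfl fun k _ => Finset.sum_congr rfl fun i _ => ?_
      simp only [add_comm (x i)]
    rw [h', ← h]
    simp only [Fintype.sum_prod_type]
    rw [Finset.sum_comm]
  rw [e1, e2]
  have i1 : ∀ μ ∈ Finset.piAntidiag (univ : Finset ι) N, _ :=
    fun μ hμ => congrArg (fun c => cw f δ x p μ * c) (hCint _ (hw1 μ hμ))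
  have i2 : ∀ μ ∈ Finset.piAntidiag (univ : Finset κ) N, _ :=
    fun μ hμ => congrArg (fun c => cw f δ y q μ * c) (hCint _ (hw2 μ hμ))
  rw [Finset.sum_congr rfl i1, Finset.sum_congr rfl i2]
  simp only [Finset.mul_sum]
  rw [Finset.sum_comm, Finset.sum_comm (s := Finset.piAntidiag (univ : Finset κ) N)]
  refine Finset.sum_congr rfl fun e _ => ?_
  have h := hres e.1 e.2.1 e.2.2 e.2.2.isLt
  rw [Lsum_shift_left, Lsum_shift_right] at h
  have h' := congrArg (fun c => C e * c) h
  simp only [Finset.mul_sum] at h'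
  refine Eq.trans ?_ (h'.trans ?_)
  · refine Finset.sum_congr rfl fun μ _ => ?_
    simp only [Tn]; ring
  · refine Finset.sum_congr rfl fun μ _ => ?_
    simp only [Tn]; ring

end Residue

end Duality

/-! ### The very well-poised series as a case of the duality series -/

section WellPoised

variable {f : ℂ → ℂ} {δ : ℂ}

lemma sf_one (z : ℂ) : sf f δ z 1 = f z := by simp [sf]

lemma sf_succ_left (z : ℂ) (n : ℕ) : sf f δ z (n + 1) = f z * sf f δ (z + δ) n := by
  rw [Nat.add_comm, sf_add, sf_one]; simp

/-- The identity behind the factor `Δ(x + μδ)/Δ(x)`, for one pair of indices with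
`X = x_i - x_j`, `M = μ_i`, `K = μ_j`. -/
lemma pair_identity (hodd : ∀ t : ℂ, f (-t) = -f t) (X : ℂ) (M K : ℕ) :
    f (X + ((M : ℂ) - K) * δ) * sf f δ (X - (K : ℂ) * δ) M * sf f δ (-X - (M : ℂ) * δ) K
      = f X * sf f δ (X + δ) M * sf f δ (-X + δ) K := by
  rw [sf_reflect hodd (-X - (M : ℂ) * δ) (X + ((M : ℂ) - K) * δ + δ) K (by ring),
    sf_reflect hodd (-X + δ) (X - (K : ℂ) * δ) K (by ring)]
  have e1 : sf f δ (X - (K : ℂ) * δ) (M + (K + 1)) = sf f δ (X - (K : ℂ) * δ) M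
      * (f (X + ((M : ℂ) - K) * δ) * sf f δ (X + ((M : ℂ) - K) * δ + δ) K) := by
    rw [sf_add, sf_succ_left]
    congr 3 <;> ring_nf
  have e2 : sf f δ (X - (K : ℂ) * δ) (K + (M + 1)) = sf f δ (X - (K : ℂ) * δ) K
      * (f X * sf f δ (X + δ) M) := by
    rw [sf_add, sf_succ_left]
    congr 3 <;> ring_nf
  rw [show M + (K + 1) = K + (M + 1) by omega, e2] at e1
  linear_combination (-(-1) ^ K) * e1

lemma prod_prod_eq_diag_mul {m : ℕ} (F : Fin m → Fin m → ℂ) :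
    ∏ i, ∏ j, F i j = (∏ i, F i i)
      * ∏ i, ∏ j ∈ Finset.univ.filter (fun j => i < j), F i j * F j i := by
  have h : ∏ i, ∏ j ∈ Finset.Ioi i, F i j * F j i = ∏ i, ∏ j ∈ {i}ᶜ, F j i := by
    rw [← Finset.prod_prod_Ioi_mul_eq_prod_prod_off_diag F]
    exact Finset.prod_congr rfl fun i _ => Finset.prod_congr rfl fun j _ => mul_comm _ _
  have e : ∀ i : Fin m, (Finset.univ.filter (fun j => i < j)) = Finset.Ioi i := by
    intro i; ext j; simp
  simp only [e]
  rw [h, Finset.prod_comm, ← Finset.prod_mul_distrib]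
  refine Finset.prod_congr rfl fun i _ => ?_
  rw [← Finset.mul_prod_erase _ _ (mem_univ i)]
  congr 1
  refine Finset.prod_congr ?_ fun _ _ => rfl
  ext j; simp

lemma Del_factor (hodd : ∀ t : ℂ, f (-t) = -f t) {m : ℕ} (x : Fin m → ℂ) (μ : Fin m → ℕ)
    (hx : ∀ i j, i ≠ j → ∀ z : ℤ, f (x i - x j + (z : ℂ) * δ) ≠ 0) :
    Del f (fun i => x i + (μ i : ℂ) * δ) / Del f x
        * ∏ i, ∏ j, (sf f δ (x i - x j + δ) (μ i))⁻¹
      = (-1) ^ (∑ i, μ i) * ∏ i, ∏ j, (sf f δ (x i - x j - (μ j : ℂ) * δ) (μ i))⁻¹ := by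
  rw [prod_prod_eq_diag_mul (fun i j => (sf f δ (x i - x j + δ) (μ i))⁻¹),
    prod_prod_eq_diag_mul (fun i j => (sf f δ (x i - x j - (μ j : ℂ) * δ) (μ i))⁻¹)]
  have hdiag : ∏ i, (sf f δ (x i - x i + δ) (μ i))⁻¹
      = (-1) ^ (∑ i, μ i) * ∏ i, (sf f δ (x i - x i - (μ i : ℂ) * δ) (μ i))⁻¹ := by
    rw [← Finset.prod_pow_eq_pow_sum, ← Finset.prod_mul_distrib]
    refine Finset.prod_congr rfl fun i _ => ?_
    rw [sf_reflect hodd (x i - x i - (μ i : ℂ) * δ) (x i - x i + δ) (μ i) (by ring), mul_inv,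
      ← mul_assoc, ← inv_pow, ← mul_pow]
    norm_num
  rw [hdiag]
  have hoff : Del f (fun i => x i + (μ i : ℂ) * δ) / Del f x
      * ∏ i, ∏ j ∈ Finset.univ.filter (fun j => i < j),
        (sf f δ (x i - x j + δ) (μ i))⁻¹ * (sf f δ (x j - x i + δ) (μ j))⁻¹
      = ∏ i, ∏ j ∈ Finset.univ.filter (fun j => i < j),
        (sf f δ (x i - x j - (μ j : ℂ) * δ) (μ i))⁻¹
          * (sf f δ (x j - x i - (μ i : ℂ) * δ) (μ j))⁻¹ := by
    unfold Del
    simp only [← Finset.prod_div_distrib, ← Finset.prod_mul_distrib]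
    refine Finset.prod_congr rfl fun i _ => Finset.prod_congr rfl fun j hj => ?_
    have hij : i ≠ j := ne_of_lt (Finset.mem_filter.mp hj).2
    have P := pair_identity (δ := δ) hodd (x i - x j) (μ i) (μ j)
    have a0 : f (x i - x j) ≠ 0 := by simpa using hx i j hij 0
    have n1 : sf f δ (x i - x j + δ) (μ i) ≠ 0 := sf_ne_zero fun r _ => by
      convert hx i j hij (r + 1) using 2; push_cast; ring
    have n2 : sf f δ (x j - x i + δ) (μ j) ≠ 0 := sf_ne_zero fun r _ => by
      convert hx j i hij.symm (r + 1) using 2; push_cast; ring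
    have n3 : sf f δ (x i - x j - (μ j : ℂ) * δ) (μ i) ≠ 0 := sf_ne_zero fun r _ => by
      convert hx i j hij (r - μ j) using 2; push_cast; ring
    have n4 : sf f δ (x j - x i - (μ i : ℂ) * δ) (μ j) ≠ 0 := sf_ne_zero fun r _ => by
      convert hx j i hij.symm (r - μ i) using 2; push_cast; ring
    rw [show -(x i - x j) = x j - x i by ring] at P
    rw [show x i + (μ i : ℂ) * δ - (x j + (μ j : ℂ) * δ)
      = x i - x j + ((μ i : ℂ) - μ j) * δ by ring]
    field_simp
    linear_combination P
  linear_combination ((-1) ^ (∑ i, μ i)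
    * ∏ i, (sf f δ (x i - x i - (μ i : ℂ) * δ) (μ i))⁻¹) * hoff

lemma sf_div (z : ℂ) (N n : ℕ) (hn : n ≤ N) (h : sf f δ z n ≠ 0) :
    sf f δ (z + (n : ℂ) * δ) (N - n) = sf f δ z N * (sf f δ z n)⁻¹ := by
  have e := sf_add (f := f) (δ := δ) z n (N - n)
  rw [Nat.add_sub_cancel' hn] at e
  rw [e]; field_simp

lemma sf_ne_zero_of_le {z : ℂ} {n N : ℕ} (hn : n ≤ N) (h : sf f δ z N ≠ 0) : sf f δ z n ≠ 0 := by
  rw [← Nat.add_sub_cancel' hn, sf_add] at h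
  exact left_ne_zero_of_mul h

/-- The factors of the very well-poised series that couple `x_i` to the additional variable
`x_0 = -s - Nδ` of the duality series; `z = x_i + s`, `M = μ_i`. -/
lemma well_poised_factor (z : ℂ) (N n M : ℕ) (hn : n ≤ N)
    (hz : ∀ r : ℤ, f (z + (r : ℂ) * δ) ≠ 0) :
    (sf f δ (z + (n : ℂ) * δ) M)⁻¹ * (sf f δ (z + δ + ((n + M : ℕ) : ℂ) * δ) (N - n))⁻¹
      = f (z + ((n + M : ℕ) : ℂ) * δ) * (f z)⁻¹ * sf f δ z n
        * (sf f δ (z + δ + (N : ℂ) * δ) M)⁻¹ * (sf f δ (z + δ) N)⁻¹ := by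
  have nz : ∀ (c : ℤ) (k : ℕ), sf f δ (z + (c : ℂ) * δ) k ≠ 0 := fun c k =>
    sf_ne_zero fun r _ => by convert hz (c + r) using 2; push_cast; ring
  have e1 : sf f δ z (n + (M + ((N - n) + 1))) = sf f δ z n * (sf f δ (z + (n : ℂ) * δ) M
      * (f (z + ((n + M : ℕ) : ℂ) * δ) * sf f δ (z + δ + ((n + M : ℕ) : ℂ) * δ) (N - n))) := by
    rw [sf_add, sf_add, sf_succ_left]
    congr 4 <;> (push_cast; ring_nf)
  have e2 : sf f δ z ((N + M) + 1) = f z * (sf f δ (z + δ) N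
      * sf f δ (z + δ + (N : ℂ) * δ) M) := by
    rw [sf_succ_left, sf_add]
  rw [show n + (M + ((N - n) + 1)) = (N + M) + 1 by omega, e2] at e1
  have n1 : f z ≠ 0 := by simpa using hz 0
  have n2 : sf f δ (z + (n : ℂ) * δ) M ≠ 0 := by simpa using nz n M
  have n3 : sf f δ (z + δ + ((n + M : ℕ) : ℂ) * δ) (N - n) ≠ 0 := by
    convert nz (1 + n + M) (N - n) using 2; push_cast; ring
  have n4 : sf f δ (z + δ + (N : ℂ) * δ) M ≠ 0 := by
    convert nz (1 + N) M using 2; push_cast; ring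
  have n5 : sf f δ (z + δ) N ≠ 0 := by
    convert nz 1 N using 2; push_cast; ring
  generalize sf f δ (z + (n : ℂ) * δ) M = A at *
  generalize sf f δ (z + δ + ((n + M : ℕ) : ℂ) * δ) (N - n) = B at *
  generalize sf f δ (z + δ + (N : ℂ) * δ) M = C at *
  generalize sf f δ (z + δ) N = D at *
  generalize f (z + ((n + M : ℕ) : ℂ) * δ) = E at *
  field_simp
  linear_combination e1

lemma Pw_factor (c q y : ℂ) (N n : ℕ) (hn : n ≤ N) :
    ∏ r ∈ Finset.range N, f (c + (if r < n then q else y) + (r : ℂ) * δ)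
      = sf f δ (c + q) n * sf f δ (c + y + (n : ℂ) * δ) (N - n) := by
  obtain ⟨d, rfl⟩ := Nat.exists_eq_add_of_le hn
  rw [Finset.prod_range_add, Nat.add_sub_cancel_left]
  unfold sf
  congr 1
  · refine Finset.prod_congr rfl fun r hr => ?_
    rw [if_pos (Finset.mem_range.mp hr)]
  · refine Finset.prod_congr rfl fun r _ => ?_
    rw [if_neg (by omega)]
    congr 1; push_cast; ring

/-- The variables `x` with `x_0 = -s - Nδ` adjoined. -/
noncomputable def extX (δ : ℂ) {m : ℕ} (N : ℕ) (x : Fin m → ℂ) (s : ℂ) : Option (Fin m) → ℂ :=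
  fun o => o.elim (-s - (N : ℂ) * δ) x

/-- The variables `x - a` with `-c₂` adjoined. -/
noncomputable def extP {m : ℕ} (a x : Fin m → ℂ) (c2 : ℂ) : Option (Fin m) → ℂ :=
  fun o => o.elim (-c2) (fun i => x i - a i)

/-- The multi-index `μ` completed to one of weight `N`, for `|μ| ≤ N`. -/
def extMu {m : ℕ} (N : ℕ) (μ : Fin m → ℕ) : Option (Fin m) → ℕ :=
  fun o => o.elim (N - ∑ i, μ i) μ

/-- The constant relating the very well-poised series to `Lsum`. -/
noncomputable def kap (f : ℂ → ℂ) (δ : ℂ) {m : ℕ} (N : ℕ) (a x : Fin m → ℂ)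
    (s c0 c1 c2 d0 d1 : ℂ) : ℂ :=
  (∏ i, sf f δ (δ + s + x i - a i) N * (sf f δ (x i + s + δ) N)⁻¹)
    * (sf f δ (δ + s - c0) N * sf f δ (δ + s - c1) N * sf f δ (δ + s - c2) N)
    * (sf f δ δ N)⁻¹
    * ∏ i, sf f δ (x i + δ + s - d0) N * sf f δ (x i + δ + s - d1) N

/-- Termwise form of `kap_mul_Evw`: with `x_0 = -s - Nδ` and `μ_0 = N - |μ|` adjoined, each summand
of the very well-poised series times `kap` is a summand of the duality series. -/
lemma term_eq (hodd : ∀ t : ℂ, f (-t) = -f t)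
    (hδ : ∀ k : ℤ, k ≠ 0 → f ((k : ℂ) * δ) ≠ 0) {m : ℕ} (N : ℕ) (a x : Fin m → ℂ)
    (s c0 c1 c2 d0 d1 : ℂ)
    (hx : ∀ i j, i ≠ j → ∀ z : ℤ, f (x i - x j + (z : ℂ) * δ) ≠ 0)
    (hs : ∀ i, ∀ z : ℤ, f (x i + s + (z : ℂ) * δ) ≠ 0)
    (ha : ∀ i, sf f δ (δ + s + x i - a i) N ≠ 0)
    (hc0 : sf f δ (δ + s - c0) N ≠ 0) (hc1 : sf f δ (δ + s - c1) N ≠ 0)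
    (hc2 : sf f δ (δ + s - c2) N ≠ 0)
    (hd0 : ∀ i, sf f δ (x i + δ + s - d0) N ≠ 0)
    (hd1 : ∀ i, sf f δ (x i + δ + s - d1) N ≠ 0)
    (μ : Fin m → ℕ) (hμ : ∑ i, μ i ≤ N) :
    cw f δ (extX δ N x s) (extP a x c2) (extMu N μ)
        * Pw f δ N (extX δ N x s) ![δ + s - d0, δ + s - d1] ![c0, c1] (extMu N μ)
      = kap f δ N a x s c0 c1 c2 d0 d1
        * Eterm f δ a x s ![c0, c1, c2] ![d0, d1, -(N : ℂ) * δ] μ := by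
  have hμi : ∀ i, μ i ≤ N := fun i =>
    (Finset.single_le_sum (fun _ _ => Nat.zero_le _) (mem_univ i)).trans hμ
  have hdel := Del_factor hodd x μ hx
  set n := ∑ i, μ i with hn
  have hNn : ((N - n : ℕ) : ℂ) = (N : ℂ) - n := by rw [Nat.cast_sub hμ]
  have hsδ : ∀ k, sf f δ δ k ≠ 0 := fun k => sf_ne_zero fun r _ => by
    convert hδ (r + 1) (by omega) using 2; push_cast; ring
  -- the factors involving the additional variable
  have cfac : ∀ z c : ℂ, z = -s - (N : ℂ) * δ + c → sf f δ (δ + s - c) N ≠ 0 →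
      sf f δ z (N - n)
        = (-1) ^ (N - n) * (sf f δ (δ + s - c) N * (sf f δ (δ + s - c) n)⁻¹) := by
    intro z c hz hc
    rw [sf_reflect hodd z (δ + s - c + (n : ℂ) * δ) (N - n) (by rw [hNn, hz]; ring),
      sf_div _ _ _ hμ (sf_ne_zero_of_le hμ hc)]
  have dfac : ∀ d : ℂ, sf f δ (-s - (N : ℂ) * δ + (δ + s - d) + ((N - n : ℕ) : ℂ) * δ) n
      = (-1) ^ n * sf f δ d n := fun d =>
    sf_reflect hodd _ _ _ (by rw [hNn]; ring)
  have nnfac : sf f δ (-s - (N : ℂ) * δ - (-s - (N : ℂ) * δ) - ((N - n : ℕ) : ℂ) * δ) (N - n)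
      = (-1) ^ (N - n) * sf f δ δ (N - n) := sf_reflect hodd _ _ _ (by ring)
  have d2fac : sf f δ (-(N : ℂ) * δ) n
      = (-1) ^ n * (sf f δ δ N * (sf f δ δ (N - n))⁻¹) := by
    rw [sf_reflect hodd (-(N : ℂ) * δ) (δ + ((N - n : ℕ) : ℂ) * δ) n (by rw [hNn]; ring)]
    have := sf_div (f := f) (δ := δ) δ N (N - n) (by omega) (hsδ _)
    rw [show N - (N - n) = n by omega] at this
    rw [this]
  have njfac : ∀ j, sf f δ (-s - (N : ℂ) * δ - x j - (μ j : ℂ) * δ) (N - n)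
      = (-1) ^ (N - n) * sf f δ (x j + s + δ + ((n + μ j : ℕ) : ℂ) * δ) (N - n) := fun j =>
    sf_reflect hodd _ _ _ (by rw [hNn]; push_cast; ring)
  have ifac : ∀ i, sf f δ (x i - (-s - (N : ℂ) * δ) - ((N - n : ℕ) : ℂ) * δ) (μ i)
      = sf f δ (x i + s + (n : ℂ) * δ) (μ i) := fun i => by
    rw [hNn]; congr 1; ring
  have wfac := fun i => well_poised_factor (x i + s) N n (μ i) hμ (hs i)
  have yfac : ∀ d : ℂ, (∀ i, sf f δ (x i + δ + s - d) N ≠ 0) → ∀ i,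
      sf f δ (x i + (δ + s - d) + (μ i : ℂ) * δ) (N - μ i)
        = sf f δ (x i + δ + s - d) N * (sf f δ (x i + δ + s - d) (μ i))⁻¹ := by
    intro d hd i
    rw [← sf_div _ _ _ (hμi i) (sf_ne_zero_of_le (hμi i) (hd i))]
    congr 2; ring
  have sgn : ∀ k : ℕ, ((-1 : ℂ) ^ k) * (-1) ^ k = 1 := fun k => by
    rw [← mul_pow]; norm_num
  have sgni : ∀ k : ℕ, ((-1 : ℂ) ^ k)⁻¹ = (-1) ^ k := fun k => by
    rw [← inv_pow]; norm_num
  have hcw : cw f δ (extX δ N x s) (extP a x c2) (extMu N μ)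
      = sf f δ (δ + s - c2) N * (sf f δ (δ + s - c2) n)⁻¹ * (sf f δ δ (N - n))⁻¹
        * (∏ j, sf f δ (δ + s + x j - a j) N * (sf f δ (δ + s + x j - a j) n)⁻¹)
        * (∏ i, sf f δ (x i + c2) (μ i) * (f (x i + s + ((n + μ i : ℕ) : ℂ) * δ)
          * (f (x i + s))⁻¹ * sf f δ (x i + s) n
          * (sf f δ (x i + s + δ + (N : ℂ) * δ) (μ i))⁻¹ * (sf f δ (x i + s + δ) N)⁻¹))
        * ((∏ i, ∏ j, sf f δ (x i - x j + a j) (μ i))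
          * ∏ i, ∏ j, (sf f δ (x i - x j - (μ j : ℂ) * δ) (μ i))⁻¹) := by
    simp only [cw, Fintype.prod_option, extX, extP, extMu, Option.elim, ← hn]
    rw [cfac _ c2 (by ring) hc2, nnfac]
    simp only [← wfac]
    have t1 : ∀ j, sf f δ (-s - (N : ℂ) * δ - (x j - a j)) (N - n)
        / sf f δ (-s - (N : ℂ) * δ - x j - (μ j : ℂ) * δ) (N - n)
        = sf f δ (δ + s + x j - a j) N * (sf f δ (δ + s + x j - a j) n)⁻¹
          * (sf f δ (x j + s + δ + ((n + μ j : ℕ) : ℂ) * δ) (N - n))⁻¹ := by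
      intro j
      have e : δ + s - (a j - x j) = δ + s + x j - a j := by ring
      rw [cfac _ (a j - x j) (by ring) (by rw [e]; exact ha j), njfac, e, div_eq_mul_inv, mul_inv,
        sgni]
      linear_combination (sf f δ (δ + s + x j - a j) N * (sf f δ (δ + s + x j - a j) n)⁻¹
          * (sf f δ (x j + s + δ + ((n + μ j : ℕ) : ℂ) * δ) (N - n))⁻¹) * sgn (N - n)
    have t2 : ∀ i, sf f δ (x i - -c2) (μ i)
        / sf f δ (x i - (-s - (N : ℂ) * δ) - ((N - n : ℕ) : ℂ) * δ) (μ i)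
        = sf f δ (x i + c2) (μ i) * (sf f δ (x i + s + (n : ℂ) * δ) (μ i))⁻¹ := by
      intro i
      rw [ifac, sub_neg_eq_add, div_eq_mul_inv]
    have t3 : ∀ i j, sf f δ (x i - (x j - a j)) (μ i) = sf f δ (x i - x j + a j) (μ i) := by
      intro i j; congr 1; ring
    simp only [t1, t2, t3, div_eq_mul_inv, mul_inv, sgni, Finset.prod_mul_distrib]
    linear_combination (sf f δ (δ + s - c2) N * (sf f δ (δ + s - c2) n)⁻¹ * (sf f δ δ (N - n))⁻¹
        * ((∏ j, sf f δ (δ + s + x j - a j) N) * ∏ j, (sf f δ (δ + s + x j - a j) n)⁻¹)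
        * ((∏ i, sf f δ (x i + c2) (μ i)) * (((∏ i, (sf f δ (x i + s + (n : ℂ) * δ) (μ i))⁻¹))
          * ∏ i, (sf f δ (x i + s + δ + ((n + μ i : ℕ) : ℂ) * δ) (N - n))⁻¹))
        * ((∏ i, ∏ j, sf f δ (x i - x j + a j) (μ i))
          * ∏ i, ∏ j, (sf f δ (x i - x j - (μ j : ℂ) * δ) (μ i))⁻¹)) * sgn (N - n)
  have hPw : Pw f δ N (extX δ N x s) ![δ + s - d0, δ + s - d1] ![c0, c1] (extMu N μ)
      = (sf f δ (δ + s - c0) N * (sf f δ (δ + s - c0) n)⁻¹ * sf f δ d0 n)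
        * (sf f δ (δ + s - c1) N * (sf f δ (δ + s - c1) n)⁻¹ * sf f δ d1 n)
        * ∏ i, (sf f δ (x i + c0) (μ i)
            * (sf f δ (x i + δ + s - d0) N * (sf f δ (x i + δ + s - d0) (μ i))⁻¹))
          * (sf f δ (x i + c1) (μ i)
            * (sf f δ (x i + δ + s - d1) N * (sf f δ (x i + δ + s - d1) (μ i))⁻¹)) := by
    have t : ∀ c d, sf f δ (δ + s - c) N ≠ 0 →
        (∏ r ∈ Finset.range N, f (-s - (N : ℂ) * δ
          + (if r < N - n then c else δ + s - d) + (r : ℂ) * δ))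
        = (-1) ^ (N - n) * (-1) ^ n
          * (sf f δ (δ + s - c) N * (sf f δ (δ + s - c) n)⁻¹ * sf f δ d n) := by
      intro c d hc
      rw [Pw_factor _ _ _ _ _ (Nat.sub_le _ _), cfac _ c rfl hc, show N - (N - n) = n by omega,
        dfac]
      ring
    simp only [Pw, Fintype.prod_option, extX, extMu, Option.elim, ← hn, Fin.prod_univ_two,
      Matrix.cons_val_zero, Matrix.cons_val_one]
    rw [t c0 d0 hc0, t c1 d1 hc1]
    have t' : ∀ i, (∏ r ∈ Finset.range N, f (x i
          + (if r < μ i then c0 else δ + s - d0) + (r : ℂ) * δ))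
        * (∏ r ∈ Finset.range N, f (x i
          + (if r < μ i then c1 else δ + s - d1) + (r : ℂ) * δ))
        = (sf f δ (x i + c0) (μ i)
            * (sf f δ (x i + δ + s - d0) N * (sf f δ (x i + δ + s - d0) (μ i))⁻¹))
          * (sf f δ (x i + c1) (μ i)
            * (sf f δ (x i + δ + s - d1) N * (sf f δ (x i + δ + s - d1) (μ i))⁻¹)) := by
      intro i
      rw [Pw_factor _ _ _ _ _ (hμi i), Pw_factor _ _ _ _ _ (hμi i), yfac d0 hd0, yfac d1 hd1]
    simp only [t']
    have s2 : ((-1 : ℂ) ^ (N - n) * (-1) ^ n) * ((-1) ^ (N - n) * (-1) ^ n) = 1 := by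
      rw [← pow_add, sgn]
    linear_combination ((sf f δ (δ + s - c0) N * (sf f δ (δ + s - c0) n)⁻¹ * sf f δ d0 n)
        * (sf f δ (δ + s - c1) N * (sf f δ (δ + s - c1) n)⁻¹ * sf f δ d1 n)
        * ∏ i, (sf f δ (x i + c0) (μ i)
            * (sf f δ (x i + δ + s - d0) N * (sf f δ (x i + δ + s - d0) (μ i))⁻¹))
          * (sf f δ (x i + c1) (μ i)
            * (sf f δ (x i + δ + s - d1) N * (sf f δ (x i + δ + s - d1) (μ i))⁻¹))) * s2
  have hE : Eterm f δ a x s ![c0, c1, c2] ![d0, d1, -(N : ℂ) * δ] μ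
      = (-1) ^ n * (∏ i, ∏ j, (sf f δ (x i - x j - (μ j : ℂ) * δ) (μ i))⁻¹)
        * (∏ i, f (x i + s + ((n + μ i : ℕ) : ℂ) * δ) * (f (x i + s))⁻¹)
        * (∏ j, sf f δ (x j + s) n * (sf f δ (δ + s + x j - a j) n)⁻¹)
        * (∏ i, ∏ j, sf f δ (x i - x j + a j) (μ i))
        * ((sf f δ d0 n * (sf f δ (δ + s - c0) n)⁻¹
            * ∏ i, sf f δ (x i + c0) (μ i) * (sf f δ (x i + δ + s - d0) (μ i))⁻¹)
          * (sf f δ d1 n * (sf f δ (δ + s - c1) n)⁻¹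
            * ∏ i, sf f δ (x i + c1) (μ i) * (sf f δ (x i + δ + s - d1) (μ i))⁻¹)
          * ((-1) ^ n * (sf f δ δ N * (sf f δ δ (N - n))⁻¹) * (sf f δ (δ + s - c2) n)⁻¹
            * ∏ i, sf f δ (x i + c2) (μ i)
              * (sf f δ (x i + s + δ + (N : ℂ) * δ) (μ i))⁻¹)) := by
    rw [← hdel, ← d2fac]
    simp only [Eterm, ← hn, Fin.prod_univ_three, Matrix.cons_val_zero, Matrix.cons_val_one,
      Matrix.cons_val, div_eq_mul_inv, Finset.prod_mul_distrib]
    have e1 : ∀ i, x i + δ + s - -(N : ℂ) * δ = x i + s + δ + (N : ℂ) * δ := fun i => by ring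
    have e2 : ∀ j, s + x j = x j + s := fun j => add_comm _ _
    simp only [e1, e2]
    rw [Finset.prod_comm (f := fun j i => sf f δ (x i - x j + a j) (μ i)),
      Finset.prod_comm (f := fun j i => (sf f δ (x i - x j + δ) (μ i))⁻¹)]
    ring
  rw [hcw, hPw, hE, kap]
  simp only [Finset.prod_mul_distrib]
  have hN1 : (sf f δ δ N)⁻¹ * sf f δ δ N = 1 := inv_mul_cancel₀ (hsδ N)
  have key : ((-1 : ℂ) ^ n * (-1) ^ n) * ((sf f δ δ N)⁻¹ * sf f δ δ N) = 1 := by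
    rw [sgn, hN1, mul_one]
  generalize (-1 : ℂ) ^ n = ε at *
  generalize sf f δ δ N = S at *
  generalize S⁻¹ = S' at *
  refine (mul_one _).symm.trans ?_
  rw [← key]
  ring

/-- The multi-indices `μ ∈ ℕ^m` with `|μ| ≤ N`, as the image of the multi-indices of weight `N`
with one more entry. -/
def trunc (m N : ℕ) : Finset (Fin m → ℕ) :=
  (Finset.piAntidiag (univ : Finset (Option (Fin m))) N).image fun μ i => μ (some i)

lemma mem_trunc {m N : ℕ} {μ : Fin m → ℕ} : μ ∈ trunc m N ↔ ∑ i, μ i ≤ N := by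
  simp only [trunc, Finset.mem_image, Finset.mem_piAntidiag]
  constructor
  · rintro ⟨ν, ⟨h, -⟩, rfl⟩
    rw [Fintype.sum_option] at h
    change ∑ i, ν (some i) ≤ N
    omega
  · intro h
    refine ⟨extMu N μ, ⟨?_, fun _ _ => mem_univ _⟩, rfl⟩
    rw [Fintype.sum_option]
    simp only [extMu, Option.elim]
    omega

lemma Evw_eq_sum (hodd : ∀ t : ℂ, f (-t) = -f t) {m : ℕ} (N : ℕ) (a x : Fin m → ℂ)
    (s c0 c1 c2 d0 d1 : ℂ) :
    Evw f δ a x s ![c0, c1, c2] ![d0, d1, -(N : ℂ) * δ]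
      = ∑ μ ∈ trunc m N, Eterm f δ a x s ![c0, c1, c2] ![d0, d1, -(N : ℂ) * δ] μ := by
  unfold Evw
  refine tsum_eq_sum fun μ hμ => ?_
  have hlt : N < ∑ i, μ i := by
    by_contra h; exact hμ (mem_trunc.mpr (not_lt.mp h))
  have h0 : sf f δ (-(N : ℂ) * δ) (∑ i, μ i) = 0 := by
    refine Finset.prod_eq_zero (Finset.mem_range.mpr hlt) ?_
    rw [← bracket_zero hodd]; congr 1; ring
  simp only [Eterm, Fin.prod_univ_three, Matrix.cons_val, h0]
  simp

/-- Up to the constant `kap`, the very well-poised series is a duality series in one more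
variable. -/
lemma kap_mul_Evw (hodd : ∀ t : ℂ, f (-t) = -f t)
    (hδ : ∀ k : ℤ, k ≠ 0 → f ((k : ℂ) * δ) ≠ 0) {m : ℕ} (N : ℕ) (a x : Fin m → ℂ)
    (s c0 c1 c2 d0 d1 : ℂ)
    (hx : ∀ i j, i ≠ j → ∀ z : ℤ, f (x i - x j + (z : ℂ) * δ) ≠ 0)
    (hs : ∀ i, ∀ z : ℤ, f (x i + s + (z : ℂ) * δ) ≠ 0)
    (ha : ∀ i, sf f δ (δ + s + x i - a i) N ≠ 0)
    (hc0 : sf f δ (δ + s - c0) N ≠ 0) (hc1 : sf f δ (δ + s - c1) N ≠ 0)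
    (hc2 : sf f δ (δ + s - c2) N ≠ 0)
    (hd0 : ∀ i, sf f δ (x i + δ + s - d0) N ≠ 0)
    (hd1 : ∀ i, sf f δ (x i + δ + s - d1) N ≠ 0) :
    kap f δ N a x s c0 c1 c2 d0 d1 * Evw f δ a x s ![c0, c1, c2] ![d0, d1, -(N : ℂ) * δ]
      = Lsum f δ N (extX δ N x s) (extP a x c2) ![δ + s - d0, δ + s - d1] ![c0, c1] := by
  have ext_restrict : ∀ ν ∈ Finset.piAntidiag (univ : Finset (Option (Fin m))) N,
      extMu N (fun i => ν (some i)) = ν := by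
    intro ν hν
    have h := (Finset.mem_piAntidiag.mp hν).1
    rw [Fintype.sum_option] at h
    funext o
    cases o with
    | none => simp only [extMu, Option.elim]; omega
    | some i => rfl
  rw [Evw_eq_sum hodd, Finset.mul_sum, trunc, Finset.sum_image]
  · unfold Lsum
    refine Finset.sum_congr rfl fun ν hν => ?_
    have hle : ∑ i, ν (some i) ≤ N := mem_trunc.mp (Finset.mem_image_of_mem _ hν)
    rw [← term_eq hodd hδ N a x s c0 c1 c2 d0 d1 hx hs ha hc0 hc1 hc2 hd0 hd1 _ hle,
      ext_restrict ν hν]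
  · intro ν hν ν' hν' h
    rw [← ext_restrict ν hν, ← ext_restrict ν' hν']
    exact congrArg (extMu N) h

end WellPoised

/-! ### The transformation for generic parameters -/

section Generic

variable {f : ℂ → ℂ} {δ : ℂ}

lemma prod_range_reflect_ite (hodd : ∀ t : ℂ, f (-t) = -f t) (N n n' : ℕ) (hn : n + n' = N)
    (p x y p' x' y' : ℂ) (hp : y' + p' + (y + x) + (N : ℂ) * δ = δ)
    (hx : y' + x' + (y + p) + (N : ℂ) * δ = δ) :
    ∏ r ∈ Finset.range N, f (y' + (if r < n then p' else x') + (r : ℂ) * δ)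
      = (-1) ^ N * ∏ r ∈ Finset.range N, f (y + (if r < n' then p else x) + (r : ℂ) * δ) := by
  rw [← Finset.prod_range_reflect]
  have : ∀ r ∈ Finset.range N, f (y' + (if N - 1 - r < n then p' else x')
        + ((N - 1 - r : ℕ) : ℂ) * δ)
      = (-1) * f (y + (if r < n' then p else x) + (r : ℂ) * δ) := by
    intro r hr
    have hr' := Finset.mem_range.mp hr
    have e : ((N - 1 - r : ℕ) : ℂ) = (N : ℂ) - 1 - r := by
      rw [Nat.cast_sub (by omega), Nat.cast_sub (by omega)]; simp
    rw [neg_one_mul, ← hodd, e]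
    congr 1
    by_cases h : r < n'
    · rw [if_pos h, if_neg (by omega)]; linear_combination hx
    · rw [if_neg h, if_pos (by omega)]; linear_combination hp
  rw [Finset.prod_congr rfl this, Finset.prod_mul_distrib]
  simp

/-- The dual series is invariant, term by term, under the passage to the transformed
parameters. -/
lemma Lsum_dual_symm (hodd : ∀ t : ℂ, f (-t) = -f t) {m : ℕ} (N : ℕ) (a x : Fin m → ℂ)
    (s c0 c1 c2 d0 d1 : ℂ)
    (hbal : (∑ i, a i) + (c0 + c1 + c2 + d0 + d1 - (N : ℂ) * δ) = 2 * δ + 3 * s)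
    (st : ℂ) (hst : st = δ + 2 * s - c0 - c1 - c2)
    (ct0 ct1 ct2 : ℂ) (hct0 : ct0 = δ + s - c1 - c2) (hct1 : ct1 = δ + s - c0 - c2)
    (hct2 : ct2 = δ + s - c0 - c1)
    (xt : Fin m → ℂ) (hxt : ∀ i, xt i = a i - x i - ∑ j, a j) :
    Lsum f δ N ![δ + st - d0, δ + st - d1] ![ct0, ct1] (extX δ N xt st) (extP a xt ct2)
      = Lsum f δ N ![δ + s - d0, δ + s - d1] ![c0, c1] (extX δ N x s) (extP a x c2) := by
  unfold Lsum
  refine Finset.sum_congr rfl fun ν hν => ?_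
  have hν' : ν 0 + ν 1 = N := by
    have := (Finset.mem_piAntidiag.mp hν).1
    simpa [Fin.sum_univ_two] using this
  congr 1
  · simp only [cw, Fin.prod_univ_two, Matrix.cons_val_zero, Matrix.cons_val_one]
    subst hst hct0 hct1 hct2
    congr 1 <;> congr 1 <;> congr 2 <;> ring
  · simp only [Pw, Fin.prod_univ_two, Matrix.cons_val_zero, Matrix.cons_val_one,
      Fintype.prod_option, extX, extP, Option.elim]
    have t0 : ∀ (d : ℂ) (n : ℕ), (∏ r ∈ Finset.range N, f (δ + st - d
          + (if r < n then -ct2 else -st - (N : ℂ) * δ) + (r : ℂ) * δ))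
        = ∏ r ∈ Finset.range N, f (δ + s - d
          + (if r < n then -c2 else -s - (N : ℂ) * δ) + (r : ℂ) * δ) := by
      intro d n
      refine Finset.prod_congr rfl fun r _ => ?_
      congr 1
      subst hst hct2
      split_ifs <;> ring
    have t1 : ∀ i, (∏ r ∈ Finset.range N, f (δ + st - d0
          + (if r < ν 0 then xt i - a i else xt i) + (r : ℂ) * δ))
        = (-1) ^ N * ∏ r ∈ Finset.range N, f (δ + s - d1
          + (if r < ν 1 then x i - a i else x i) + (r : ℂ) * δ) := by
      intro i
      refine prod_range_reflect_ite hodd N _ _ hν' _ _ _ _ _ _ ?_ ?_ <;>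
      · rw [hxt, hst]; linear_combination -hbal
    have t2 : ∀ i, (∏ r ∈ Finset.range N, f (δ + st - d1
          + (if r < ν 1 then xt i - a i else xt i) + (r : ℂ) * δ))
        = (-1) ^ N * ∏ r ∈ Finset.range N, f (δ + s - d0
          + (if r < ν 0 then x i - a i else x i) + (r : ℂ) * δ) := by
      intro i
      refine prod_range_reflect_ite hodd N _ _ (by omega) _ _ _ _ _ _ ?_ ?_ <;>
      · rw [hxt, hst]; linear_combination -hbal
    simp only [t0, t1, t2, Finset.prod_mul_distrib, Finset.prod_const]
    have sgn : (((-1 : ℂ) ^ N) ^ (univ : Finset (Fin m)).card)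
        * ((-1 : ℂ) ^ N) ^ (univ : Finset (Fin m)).card = 1 := by
      rw [← mul_pow, ← mul_pow]; norm_num
    generalize (((-1 : ℂ) ^ N) ^ (univ : Finset (Fin m)).card) = ε at *
    generalize (∏ i, ∏ r ∈ Finset.range N, f (δ + s - d1
          + (if r < ν 1 then x i - a i else x i) + (r : ℂ) * δ)) = A
    generalize (∏ i, ∏ r ∈ Finset.range N, f (δ + s - d0
          + (if r < ν 0 then x i - a i else x i) + (r : ℂ) * δ)) = B
    generalize (∏ r ∈ Finset.range N, f (δ + s - d0
          + (if r < ν 0 then -c2 else -s - (N : ℂ) * δ) + (r : ℂ) * δ)) = C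
    generalize (∏ r ∈ Finset.range N, f (δ + s - d1
          + (if r < ν 1 then -c2 else -s - (N : ℂ) * δ) + (r : ℂ) * δ)) = D
    linear_combination (A * B * C * D) * sgn

/-- The nonvanishing conditions on `x, s, d₀, d₁` under which the duality theorem applies to the
series attached to the very well-poised one, except the one on the balancing constant. -/
structure GenericParams (f : ℂ → ℂ) (δ : ℂ) {m : ℕ} (x : Fin m → ℂ) (s d0 d1 : ℂ) : Prop where
  xx : ∀ i j, i ≠ j → ∀ e z : ℤ, (e = -1 ∨ e = 0 ∨ e = 1) →
    f (x i - x j + (e : ℂ) * (d1 - d0) + (z : ℂ) * δ) ≠ 0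
  xs : ∀ i, ∀ e z : ℤ, (e = -1 ∨ e = 0 ∨ e = 1) →
    f (x i + s + (e : ℂ) * (d1 - d0) + (z : ℂ) * δ) ≠ 0
  dd : ∀ z : ℤ, f (d1 - d0 + (z : ℂ) * δ) ≠ 0
  xd : ∀ i, ∀ k : Fin 2, ∀ z : ℤ, f (x i + s - ![d0, d1] k + (z : ℂ) * δ) ≠ 0
  d : ∀ k : Fin 2, ∀ z : ℤ, f (![d0, d1] k + (z : ℂ) * δ) ≠ 0

lemma duality_generic (hf : f ≠ 0) (hdiff : Differentiable ℂ f)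
    (hodd : ∀ t : ℂ, f (-t) = -f t)
    (hRiem : ∀ x y u v : ℂ,
      f (x + y) * f (x - y) * f (u + v) * f (u - v) =
        f (x + u) * f (x - u) * f (y + v) * f (y - v)
          - f (x + v) * f (x - v) * f (y + u) * f (y - u))
    (hδ : ∀ k : ℤ, k ≠ 0 → f ((k : ℂ) * δ) ≠ 0) {m : ℕ} (N : ℕ) (a x : Fin m → ℂ)
    (s c0 c1 c2 d0 d1 : ℂ)
    (hbal : (∑ i, a i) + (c0 + c1 + c2 + d0 + d1 - (N : ℂ) * δ) = 2 * δ + 3 * s)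
    (hg : GenericParams f δ x s d0 d1)
    (hr : ∀ r : ℕ, r ≠ 0 → ∀ z : ℤ,
      f ((r : ℂ) * ((∑ i, a i) + c2 - s) + (z : ℂ) * δ) ≠ 0) :
    Lsum f δ N (extX δ N x s) (extP a x c2) ![δ + s - d0, δ + s - d1] ![c0, c1]
      = Lsum f δ N ![δ + s - d0, δ + s - d1] ![c0, c1] (extX δ N x s) (extP a x c2) := by
  have hsum : ∑ o, extX δ N x s o - ∑ o, extP a x c2 o
      = (∑ i, a i) + c2 - s - (N : ℂ) * δ := by
    simp only [Fintype.sum_option, extX, extP, Option.elim, Finset.sum_sub_distrib]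
    ring
  have hneg : ∀ u v : ℂ, f u ≠ 0 → v = -u → f v ≠ 0 := by
    intro u v hu hv; rw [hv, hodd]; exact neg_ne_zero.mpr hu
  have hy : ∀ k l : Fin 2, ∃ e : ℤ, (e = -1 ∨ e = 0 ∨ e = 1) ∧ (k ≠ l → e ≠ 0) ∧
      (![δ + s - d0, δ + s - d1] k - ![δ + s - d0, δ + s - d1] l : ℂ)
        = (e : ℂ) * (d1 - d0) := by
    intro k l
    fin_cases k <;> fin_cases l
    · exact ⟨0, by simp, by simp, by simp⟩
    · exact ⟨1, by simp, by simp, by simp⟩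
    · exact ⟨-1, by simp, by simp, by simp⟩
    · exact ⟨0, by simp, by simp, by simp⟩
  refine duality hf hdiff hodd hRiem hδ N _ _ _ _ ?_ ?_ ?_ ?_
  · rw [hsum]
    simp only [Fin.sum_univ_two, Matrix.cons_val_zero, Matrix.cons_val_one]
    linear_combination hbal
  · intro i j k l hne z
    obtain ⟨e, he, hkl, hyy⟩ := hy k l
    rw [hyy]
    by_cases hij : i = j
    · subst hij
      have hkl' : k ≠ l := fun h => hne ⟨rfl, h⟩
      have := hkl hkl'
      rcases he with rfl | rfl | rfl
      · refine hneg _ _ (hg.dd (-z)) ?_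
        push_cast; ring
      · exact absurd rfl this
      · convert hg.dd z using 2
        push_cast; ring
    · have he' : -e = -1 ∨ -e = 0 ∨ -e = 1 := by omega
      match i, j, hij with
      | none, none, h => exact absurd rfl h
      | none, some j, _ =>
        refine hneg _ _ (hg.xs j (-e) (N - z) he') ?_
        simp only [extX, Option.elim]; push_cast; ring
      | some i, none, _ =>
        convert hg.xs i e (N + z) he using 2
        simp only [extX, Option.elim]; push_cast; ring
      | some i, some j, h =>
        exact hg.xx i j (fun h' => h (congrArg some h')) e z he
  · intro i k r
    have hk : (![δ + s - d0, δ + s - d1] k : ℂ) = δ + s - ![d0, d1] k := by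
      fin_cases k <;> rfl
    rw [hk]
    match i with
    | none =>
      refine hneg _ _ (hg.d k (N - 1 - r)) ?_
      simp only [extX, Option.elim]; push_cast; ring
    | some i =>
      convert hg.xd i k (1 + r) using 2
      simp only [extX, Option.elim]; push_cast; ring
  · intro r hr0 z
    rw [hsum]
    convert hr r hr0 (z - r * N) using 2
    push_cast; ring

/-- The transformation for parameters generic enough that duality applies to both series. -/
lemma bailey_generic (hf : f ≠ 0) (hdiff : Differentiable ℂ f)
    (hodd : ∀ t : ℂ, f (-t) = -f t)
    (hRiem : ∀ x y u v : ℂ,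
      f (x + y) * f (x - y) * f (u + v) * f (u - v) =
        f (x + u) * f (x - u) * f (y + v) * f (y - v)
          - f (x + v) * f (x - v) * f (y + u) * f (y - u))
    (hδ : ∀ k : ℤ, k ≠ 0 → f ((k : ℂ) * δ) ≠ 0) {m : ℕ} (N : ℕ) (a x : Fin m → ℂ)
    (s c0 c1 c2 d0 d1 : ℂ)
    (hbal : (∑ i, a i) + (c0 + c1 + c2 + d0 + d1 - (N : ℂ) * δ) = 2 * δ + 3 * s)
    (st : ℂ) (hst : st = δ + 2 * s - c0 - c1 - c2)
    (ct0 ct1 ct2 : ℂ) (hct0 : ct0 = δ + s - c1 - c2) (hct1 : ct1 = δ + s - c0 - c2)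
    (hct2 : ct2 = δ + s - c0 - c1)
    (xt : Fin m → ℂ) (hxt : ∀ i, xt i = a i - x i - ∑ j, a j)
    (hg : GenericParams f δ x s d0 d1) (hgt : GenericParams f δ xt st d0 d1)
    (hr : ∀ r : ℕ, r ≠ 0 → ∀ z : ℤ,
      f ((r : ℂ) * ((∑ i, a i) + c2 - s) + (z : ℂ) * δ) ≠ 0)
    (ha : ∀ i, sf f δ (δ + s + x i - a i) N ≠ 0)
    (hat : ∀ i, sf f δ (δ + st + xt i - a i) N ≠ 0)
    (hc0 : sf f δ (δ + s - c0) N ≠ 0) (hc1 : sf f δ (δ + s - c1) N ≠ 0)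
    (hc2 : sf f δ (δ + s - c2) N ≠ 0) :
    Evw f δ a xt st ![ct0, ct1, ct2] ![d0, d1, -(N : ℂ) * δ] =
      (∏ i, sf f δ (δ + s + x i - a i) N * sf f δ (δ + s + x i - d1) N
          / (sf f δ (δ + s + x i) N * sf f δ (δ + s + x i - a i - d1) N))
        * (∏ i, sf f δ (δ + st + xt i) N * sf f δ (δ + st + xt i - a i - d1) N
            / (sf f δ (δ + st + xt i - a i) N * sf f δ (δ + st + xt i - d1) N))
        * Evw f δ a x s ![c0, c1, c2] ![d0, d1, -(N : ℂ) * δ] := by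
  have ec0 : δ + st - ct0 = δ + s - c0 := by rw [hst, hct0]; ring
  have ec1 : δ + st - ct1 = δ + s - c1 := by rw [hst, hct1]; ring
  have ec2 : δ + st - ct2 = δ + s - c2 := by rw [hst, hct2]; ring
  have hbalt : (∑ i, a i) + (ct0 + ct1 + ct2 + d0 + d1 - (N : ℂ) * δ) = 2 * δ + 3 * st := by
    rw [hst, hct0, hct1, hct2]; linear_combination hbal
  have hrt : ∀ r : ℕ, r ≠ 0 → ∀ z : ℤ,
      f ((r : ℂ) * ((∑ i, a i) + ct2 - st) + (z : ℂ) * δ) ≠ 0 := by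
    intro r hr0 z
    convert hr r hr0 z using 4
    rw [hct2, hst]; ring
  -- consequences of genericity, for either set of parameters
  have gx : ∀ (x : Fin m → ℂ) (s : ℂ), GenericParams f δ x s d0 d1 →
      ∀ i j, i ≠ j → ∀ z : ℤ, f (x i - x j + (z : ℂ) * δ) ≠ 0 := by
    intro x s hg i j hij z
    simpa using hg.xx i j hij 0 z (by simp)
  have gs : ∀ (x : Fin m → ℂ) (s : ℂ), GenericParams f δ x s d0 d1 →
      ∀ i, ∀ z : ℤ, f (x i + s + (z : ℂ) * δ) ≠ 0 := by
    intro x s hg i z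
    simpa using hg.xs i 0 z (by simp)
  have gz : ∀ (x : Fin m → ℂ) (s : ℂ), GenericParams f δ x s d0 d1 →
      ∀ i, sf f δ (x i + s + δ) N ≠ 0 := by
    intro x s hg i
    refine sf_ne_zero fun r _ => ?_
    convert gs x s hg i (1 + r) using 2; push_cast; ring
  have g0 : ∀ (x : Fin m → ℂ) (s : ℂ), GenericParams f δ x s d0 d1 →
      ∀ i, sf f δ (x i + δ + s - d0) N ≠ 0 := by
    intro x s hg i
    refine sf_ne_zero fun r _ => ?_
    convert hg.xd i 0 (1 + r) using 2
    simp only [Matrix.cons_val_zero]; push_cast; ring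
  have g1 : ∀ (x : Fin m → ℂ) (s : ℂ), GenericParams f δ x s d0 d1 →
      ∀ i, sf f δ (x i + δ + s - d1) N ≠ 0 := by
    intro x s hg i
    refine sf_ne_zero fun r _ => ?_
    convert hg.xd i 1 (1 + r) using 2
    simp only [Matrix.cons_val_one]; push_cast; ring
  have hsδ : sf f δ δ N ≠ 0 := sf_ne_zero fun r _ => by
    convert hδ (r + 1) (by omega) using 2; push_cast; ring
  have K := kap_mul_Evw hodd hδ N a x s c0 c1 c2 d0 d1 (gx x s hg) (gs x s hg) ha hc0 hc1 hc2
    (g0 x s hg) (g1 x s hg)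
  have Kt := kap_mul_Evw hodd hδ N a xt st ct0 ct1 ct2 d0 d1 (gx xt st hgt) (gs xt st hgt) hat
    (by rw [ec0]; exact hc0) (by rw [ec1]; exact hc1) (by rw [ec2]; exact hc2)
    (g0 xt st hgt) (g1 xt st hgt)
  rw [duality_generic hf hdiff hodd hRiem hδ N a x s c0 c1 c2 d0 d1 hbal hg hr] at K
  rw [duality_generic hf hdiff hodd hRiem hδ N a xt st ct0 ct1 ct2 d0 d1 hbalt hgt hrt,
    Lsum_dual_symm hodd N a x s c0 c1 c2 d0 d1 hbal st hst ct0 ct1 ct2 hct0 hct1 hct2 xt hxt,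
    ← K] at Kt
  have e0 : ∀ i, sf f δ (x i + δ + s - d0) N
      = (-1) ^ N * sf f δ (δ + st + xt i - a i - d1) N := fun i =>
    sf_reflect hodd _ _ _ (by rw [hxt, hst]; linear_combination -hbal)
  have e0t : ∀ i, sf f δ (δ + s + x i - a i - d1) N
      = (-1) ^ N * sf f δ (xt i + δ + st - d0) N := fun i =>
    sf_reflect hodd _ _ _ (by rw [hxt, hst]; linear_combination -hbal)
  have hk : kap f δ N a xt st ct0 ct1 ct2 d0 d1
      * ((∏ i, sf f δ (δ + s + x i - a i) N * sf f δ (δ + s + x i - d1) N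
          / (sf f δ (δ + s + x i) N * sf f δ (δ + s + x i - a i - d1) N))
        * (∏ i, sf f δ (δ + st + xt i) N * sf f δ (δ + st + xt i - a i - d1) N
            / (sf f δ (δ + st + xt i - a i) N * sf f δ (δ + st + xt i - d1) N)))
      = kap f δ N a x s c0 c1 c2 d0 d1 := by
    unfold kap
    rw [ec0, ec1, ec2]
    have hi : ∀ i, (sf f δ (δ + st + xt i - a i) N * (sf f δ (xt i + st + δ) N)⁻¹)
        * (sf f δ (xt i + δ + st - d0) N * sf f δ (xt i + δ + st - d1) N)
        * (sf f δ (δ + s + x i - a i) N * sf f δ (δ + s + x i - d1) N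
          / (sf f δ (δ + s + x i) N * sf f δ (δ + s + x i - a i - d1) N))
        * (sf f δ (δ + st + xt i) N * sf f δ (δ + st + xt i - a i - d1) N
            / (sf f δ (δ + st + xt i - a i) N * sf f δ (δ + st + xt i - d1) N))
        = (sf f δ (δ + s + x i - a i) N * (sf f δ (x i + s + δ) N)⁻¹)
          * (sf f δ (x i + δ + s - d0) N * sf f δ (x i + δ + s - d1) N) := by
      intro i
      rw [e0, e0t, show δ + st + xt i - d1 = xt i + δ + st - d1 by ring,
        show δ + s + x i - d1 = x i + δ + s - d1 by ring,
        show δ + st + xt i = xt i + st + δ by ring, show δ + s + x i = x i + s + δ by ring]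
      have n1 := gz x s hg i
      have n2 := gz xt st hgt i
      have n3 := g0 xt st hgt i
      have n4 := g1 xt st hgt i
      have n5 := hat i
      rw [show δ + st + xt i - a i = xt i + st + δ - a i by ring] at n5
      have sg : ((-1 : ℂ) ^ N) ≠ 0 := pow_ne_zero _ (by norm_num)
      have sg2 : ((-1 : ℂ) ^ N) * (-1) ^ N = 1 := by rw [← mul_pow]; norm_num
      generalize (-1 : ℂ) ^ N = ε at *
      generalize sf f δ (xt i + st + δ) N = A1 at *
      generalize sf f δ (x i + s + δ) N = A2 at *
      generalize sf f δ (xt i + δ + st - d0) N = A3 at *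
      generalize sf f δ (xt i + δ + st - d1) N = A4 at *
      generalize sf f δ (xt i + st + δ - a i) N = A5 at *
      generalize sf f δ (xt i + st + δ - a i - d1) N = A6 at *
      generalize sf f δ (x i + s + δ - a i) N = A7 at *
      generalize sf f δ (x i + δ + s - d1) N = A8 at *
      field_simp
      linear_combination (-A6 * A7 * A8) * sg2
    have hp := Finset.prod_congr (rfl : (univ : Finset (Fin m)) = univ) fun i _ => hi i
    simp only [Finset.prod_mul_distrib] at hp ⊢
    linear_combination (sf f δ (δ + s - c0) N * sf f δ (δ + s - c1) N * sf f δ (δ + s - c2) N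
      * (sf f δ δ N)⁻¹) * hp
  have hk0 : kap f δ N a xt st ct0 ct1 ct2 d0 d1 ≠ 0 := by
    unfold kap
    rw [ec0, ec1, ec2]
    exact mul_ne_zero (mul_ne_zero (mul_ne_zero (Finset.prod_ne_zero_iff.mpr fun i _ =>
      mul_ne_zero (hat i) (inv_ne_zero (gz xt st hgt i)))
      (mul_ne_zero (mul_ne_zero hc0 hc1) hc2)) (inv_ne_zero hsδ))
      (Finset.prod_ne_zero_iff.mpr fun i _ => mul_ne_zero (g0 xt st hgt i) (g1 xt st hgt i))
  refine mul_left_cancel₀ hk0 ?_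
  rw [Kt, ← mul_assoc, hk]

end Generic

/-! ### Passage to the limit -/

section Limit

open Filter

variable {f : ℂ → ℂ} {δ : ℂ}

lemma eventually_residual_ne (hf : f ≠ 0) (hdiff : Differentiable ℂ f) (α : ℤ) (hα : α ≠ 0)
    (β : ℂ) (g : ℂ → ℂ) (hg : ∀ t, g t = (α : ℂ) * t + β) :
    ∀ᶠ t in residual ℂ, f (g t) ≠ 0 := by
  refine residual_of_dense_open (s := {t | f (g t) ≠ 0}) ?_ ?_
  · have : Continuous fun t => f (g t) := by
      simp only [hg]
      exact hdiff.continuous.comp (by fun_prop)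
    exact isOpen_ne_fun this continuous_const
  · simp only [hg]
    exact dense_bracket_ne hf hdiff _ _ (Int.cast_ne_zero.mpr hα)

/-- Along a complex line with suitable integer slopes, almost all parameters, in the sense of
Baire category, are generic. -/
lemma eventually_residual_generic (hf : f ≠ 0) (hdiff : Differentiable ℂ f) {m : ℕ}
    (x : Fin m → ℂ) (X : Fin m → ℤ) (s : ℂ) (σ : ℤ) (d0 d1 : ℂ)
    (hX : ∀ i j, i ≠ j → ∀ e : ℤ, (e = -1 ∨ e = 0 ∨ e = 1) → X i - X j + 2 * e ≠ 0)
    (hS : ∀ i, ∀ e : ℤ, (e = -1 ∨ e = 0 ∨ e = 1) → X i + σ + 2 * e ≠ 0)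
    (hD : ∀ i, X i + σ - 1 ≠ 0 ∧ X i + σ - 3 ≠ 0) :
    ∀ᶠ t in residual ℂ, GenericParams f δ (fun i => x i + (X i : ℂ) * t) (s + (σ : ℂ) * t)
      (d0 + t) (d1 + 3 * t) := by
  have e1 : ∀ᶠ t in residual ℂ, ∀ i j, i ≠ j → ∀ e z : ℤ, (e = -1 ∨ e = 0 ∨ e = 1) →
      f (x i + (X i : ℂ) * t - (x j + (X j : ℂ) * t)
        + (e : ℂ) * (d1 + 3 * t - (d0 + t)) + (z : ℂ) * δ) ≠ 0 := by
    simp only [eventually_countable_forall]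
    intro i j hij e z he
    refine eventually_residual_ne hf hdiff _ (hX i j hij e he)
      (x i - x j + (e : ℂ) * (d1 - d0) + (z : ℂ) * δ) _ fun t => ?_
    push_cast; ring
  have e2 : ∀ᶠ t in residual ℂ, ∀ i, ∀ e z : ℤ, (e = -1 ∨ e = 0 ∨ e = 1) →
      f (x i + (X i : ℂ) * t + (s + (σ : ℂ) * t)
        + (e : ℂ) * (d1 + 3 * t - (d0 + t)) + (z : ℂ) * δ) ≠ 0 := by
    simp only [eventually_countable_forall]
    intro i e z he
    refine eventually_residual_ne hf hdiff _ (hS i e he)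
      (x i + s + (e : ℂ) * (d1 - d0) + (z : ℂ) * δ) _ fun t => ?_
    push_cast; ring
  have e3 : ∀ᶠ t in residual ℂ, ∀ z : ℤ, f (d1 + 3 * t - (d0 + t) + (z : ℂ) * δ) ≠ 0 := by
    simp only [eventually_countable_forall]
    intro z
    refine eventually_residual_ne hf hdiff 2 (by norm_num) (d1 - d0 + (z : ℂ) * δ) _ fun t => ?_
    push_cast; ring
  have e4 : ∀ᶠ t in residual ℂ, ∀ i, ∀ k : Fin 2, ∀ z : ℤ,
      f (x i + (X i : ℂ) * t + (s + (σ : ℂ) * t) - ![d0 + t, d1 + 3 * t] k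
        + (z : ℂ) * δ) ≠ 0 := by
    simp only [eventually_countable_forall]
    intro i k z
    fin_cases k
    · refine eventually_residual_ne hf hdiff _ (hD i).1 (x i + s - d0 + (z : ℂ) * δ) _ fun t => ?_
      simp; ring
    · refine eventually_residual_ne hf hdiff _ (hD i).2 (x i + s - d1 + (z : ℂ) * δ) _ fun t => ?_
      simp; ring
  have e5 : ∀ᶠ t in residual ℂ, ∀ k : Fin 2, ∀ z : ℤ,
      f (![d0 + t, d1 + 3 * t] k + (z : ℂ) * δ) ≠ 0 := by
    simp only [eventually_countable_forall]
    intro k z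
    fin_cases k
    · refine eventually_residual_ne hf hdiff 1 (by norm_num) (d0 + (z : ℂ) * δ) _ fun t => ?_
      simp; ring
    · refine eventually_residual_ne hf hdiff 3 (by norm_num) (d1 + (z : ℂ) * δ) _ fun t => ?_
      simp; ring
  filter_upwards [e1, e2, e3, e4, e5] with t h1 h2 h3 h4 h5
  exact ⟨h1, h2, h3, h4, h5⟩

lemma continuous_sf_comp (hf : Continuous f) {g : ℂ → ℂ} (hg : Continuous g) (n : ℕ) :
    Continuous fun t => sf f δ (g t) n := by
  unfold sf
  exact continuous_finsetProd _ fun r _ => hf.comp (by fun_prop)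

lemma continuous_Del_comp (hf : Continuous f) {m : ℕ} {x : ℂ → Fin m → ℂ}
    (hx : ∀ i, Continuous fun t => x t i) : Continuous fun t => Del f (x t) := by
  unfold Del
  refine continuous_finsetProd _ fun i _ => continuous_finsetProd _ fun j _ => hf.comp ?_
  exact (hx i).sub (hx j)

lemma continuousAt_Eterm (hf : Continuous f) {m : ℕ} (N : ℕ) (a : Fin m → ℂ)
    (x : ℂ → Fin m → ℂ) (s : ℂ → ℂ) (u v : ℂ → Fin 3 → ℂ)
    (hx : ∀ i, Continuous fun t => x t i) (hs : Continuous s)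
    (hu : ∀ k, Continuous fun t => u t k) (hv : ∀ k, Continuous fun t => v t k) (t₀ : ℂ)
    (h1 : ∀ i j, i ≠ j → f (x t₀ i - x t₀ j) ≠ 0)
    (h2 : ∀ i, f (x t₀ i + s t₀) ≠ 0)
    (h3 : ∀ (j : Fin m) (l : ℕ), l < N → f (δ + s t₀ + x t₀ j - a j + (l : ℂ) * δ) ≠ 0)
    (h4 : ∀ (i j : Fin m) (l : ℕ), l < N → f (x t₀ i - x t₀ j + δ + (l : ℂ) * δ) ≠ 0)
    (h5 : ∀ (k : Fin 3) (l : ℕ), l < N → f (δ + s t₀ - u t₀ k + (l : ℂ) * δ) ≠ 0)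
    (h6 : ∀ (i : Fin m) (k : Fin 3) (l : ℕ), l < N →
      f (x t₀ i + δ + s t₀ - v t₀ k + (l : ℂ) * δ) ≠ 0)
    (μ : Fin m → ℕ) (hμ : ∑ i, μ i ≤ N) :
    ContinuousAt (fun t => Eterm f δ a (x t) (s t) (u t) (v t) μ) t₀ := by
  have hμi : ∀ i, μ i ≤ N := fun i =>
    (Finset.single_le_sum (fun _ _ => Nat.zero_le _) (mem_univ i)).trans hμ
  have S : ∀ {g : ℂ → ℂ}, Continuous g → ∀ n, ContinuousAt (fun t => sf f δ (g t) n) t₀ :=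
    fun hg n => (continuous_sf_comp hf hg n).continuousAt
  unfold Eterm
  refine ((ContinuousAt.mul ?_ ?_).mul ?_).mul ?_
  · refine ContinuousAt.div (continuous_Del_comp hf fun i => ?_).continuousAt
      (continuous_Del_comp hf hx).continuousAt ?_
    · exact (hx i).add continuous_const
    · refine Finset.prod_ne_zero_iff.mpr fun i _ => Finset.prod_ne_zero_iff.mpr fun j hj => ?_
      exact h1 i j (ne_of_lt (Finset.mem_filter.mp hj).2)
  · refine tendsto_finsetProd _ fun i _ => ?_
    refine ContinuousAt.div (hf.comp ?_).continuousAt (hf.comp ?_).continuousAt (h2 i)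
    · exact ((hx i).add hs).add continuous_const
    · exact (hx i).add hs
  · refine tendsto_finsetProd _ fun j _ => ContinuousAt.mul ?_ (tendsto_finsetProd _ fun i _ => ?_)
    · refine ContinuousAt.div (S (hs.add (hx j)) _)
        (S (((continuous_const.add hs).add (hx j)).sub continuous_const) _) ?_
      exact sf_ne_zero fun r hr => h3 j r (hr.trans_le hμ)
    · refine ContinuousAt.div (S (((hx i).sub (hx j)).add continuous_const) _)
        (S (((hx i).sub (hx j)).add continuous_const) _) ?_
      exact sf_ne_zero fun r hr => h4 i j r (hr.trans_le (hμi i))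
  · refine tendsto_finsetProd _ fun k _ => ContinuousAt.mul ?_ (tendsto_finsetProd _ fun i _ => ?_)
    · refine ContinuousAt.div (S (hv k) _) (S ((continuous_const.add hs).sub (hu k)) _) ?_
      exact sf_ne_zero fun r hr => h5 k r (hr.trans_le hμ)
    · refine ContinuousAt.div (S ((hx i).add (hu k)) _)
        (S ((((hx i).add continuous_const).add hs).sub (hv k)) _) ?_
      exact sf_ne_zero fun r hr => h6 i k r (hr.trans_le (hμi i))

lemma continuousAt_Evw (hodd : ∀ t : ℂ, f (-t) = -f t)
    (hf : Continuous f) {m : ℕ} (N : ℕ) (a : Fin m → ℂ)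
    (x : ℂ → Fin m → ℂ) (s c0 c1 c2 d0 d1 : ℂ → ℂ)
    (hx : ∀ i, Continuous fun t => x t i) (hs : Continuous s)
    (hc0 : Continuous c0) (hc1 : Continuous c1) (hc2 : Continuous c2)
    (hd0 : Continuous d0) (hd1 : Continuous d1) (t₀ : ℂ)
    (h1 : ∀ i j, i ≠ j → f (x t₀ i - x t₀ j) ≠ 0)
    (h2 : ∀ i, f (x t₀ i + s t₀) ≠ 0)
    (h3 : ∀ (j : Fin m) (l : ℕ), l < N → f (δ + s t₀ + x t₀ j - a j + (l : ℂ) * δ) ≠ 0)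
    (h4 : ∀ (i j : Fin m) (l : ℕ), l < N → f (x t₀ i - x t₀ j + δ + (l : ℂ) * δ) ≠ 0)
    (h5 : ∀ (k : Fin 3) (l : ℕ), l < N →
      f (δ + s t₀ - ![c0 t₀, c1 t₀, c2 t₀] k + (l : ℂ) * δ) ≠ 0)
    (h6 : ∀ (i : Fin m) (k : Fin 3) (l : ℕ), l < N →
      f (x t₀ i + δ + s t₀ - ![d0 t₀, d1 t₀, -(N : ℂ) * δ] k + (l : ℂ) * δ) ≠ 0) :
    ContinuousAt (fun t => Evw f δ a (x t) (s t) ![c0 t, c1 t, c2 t]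
      ![d0 t, d1 t, -(N : ℂ) * δ]) t₀ := by
  simp only [Evw_eq_sum hodd]
  refine tendsto_finsetSum _ fun μ hμ => ?_
  refine continuousAt_Eterm hf N a x s (fun t => ![c0 t, c1 t, c2 t])
    (fun t => ![d0 t, d1 t, -(N : ℂ) * δ]) hx hs ?_ ?_ t₀ h1 h2 h3 h4 h5 h6 μ (mem_trunc.mp hμ)
  · intro k; fin_cases k <;> assumption
  · intro k
    fin_cases k
    · exact hd0
    · exact hd1
    · exact continuous_const

end Limit

/-- **Multiple Bailey transformation II** (Theorem 4.2, formula (4.8)). -/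
theorem multiple_bailey_transformation_II
    (f : ℂ → ℂ) (hf : f ≠ 0) (hodd : ∀ t : ℂ, f (-t) = -f t) (hdiff : Differentiable ℂ f)
    (hRiem : ∀ x y u v : ℂ,
      f (x + y) * f (x - y) * f (u + v) * f (u - v) =
        f (x + u) * f (x - u) * f (y + v) * f (y - v)
          - f (x + v) * f (x - v) * f (y + u) * f (y - u))
    (δ : ℂ) (hδ : ∀ k : ℤ, k ≠ 0 → f ((k : ℂ) * δ) ≠ 0)
    (m N : ℕ) (a x : Fin m → ℂ) (s c0 c1 c2 d0 d1 d2 : ℂ)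
    (hbal : (∑ i, a i) + (c0 + c1 + c2 + d0 + d1 + d2) = 2 * δ + 3 * s)
    (hd2 : d2 = -(N : ℂ) * δ)
    (st : ℂ) (hst : st = δ + 2 * s - c0 - c1 - c2)
    (ct0 ct1 ct2 : ℂ) (hct0 : ct0 = δ + s - c1 - c2) (hct1 : ct1 = δ + s - c0 - c2)
    (hct2 : ct2 = δ + s - c0 - c1)
    (xt : Fin m → ℂ) (hxt : ∀ i, xt i = a i - x i - ∑ j, a j)
    (h1 : ∀ i j, i ≠ j → f (x i - x j) ≠ 0)
    (h1t : ∀ i j, i ≠ j → f (xt i - xt j) ≠ 0)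
    (h2 : ∀ i, f (x i + s) ≠ 0) (h2t : ∀ i, f (xt i + st) ≠ 0)
    (h3 : ∀ (j : Fin m) (l : ℕ), l < N → f (δ + s + x j - a j + (l : ℂ) * δ) ≠ 0)
    (h3t : ∀ (j : Fin m) (l : ℕ), l < N → f (δ + st + xt j - a j + (l : ℂ) * δ) ≠ 0)
    (h4 : ∀ (i j : Fin m) (l : ℕ), l < N → f (x i - x j + δ + (l : ℂ) * δ) ≠ 0)
    (h4t : ∀ (i j : Fin m) (l : ℕ), l < N → f (xt i - xt j + δ + (l : ℂ) * δ) ≠ 0)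
    (h5 : ∀ (k : Fin 3) (l : ℕ), l < N → f (δ + s - ![c0, c1, c2] k + (l : ℂ) * δ) ≠ 0)
    (h5t : ∀ (k : Fin 3) (l : ℕ), l < N →
      f (δ + st - ![ct0, ct1, ct2] k + (l : ℂ) * δ) ≠ 0)
    (h6 : ∀ (i : Fin m) (k : Fin 3) (l : ℕ), l < N →
      f (x i + δ + s - ![d0, d1, d2] k + (l : ℂ) * δ) ≠ 0)
    (h6t : ∀ (i : Fin m) (k : Fin 3) (l : ℕ), l < N →
      f (xt i + δ + st - ![d0, d1, d2] k + (l : ℂ) * δ) ≠ 0)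
    (h7 : ∀ (i : Fin m) (l : ℕ), l < N → f (δ + s + x i + (l : ℂ) * δ) ≠ 0)
    (h8 : ∀ (i : Fin m) (l : ℕ), l < N →
      f (δ + s + x i - a i - d1 + (l : ℂ) * δ) ≠ 0) :
    Evw f δ a xt st ![ct0, ct1, ct2] ![d0, d1, d2] =
      (∏ i, sf f δ (δ + s + x i - a i) N * sf f δ (δ + s + x i - d1) N
          / (sf f δ (δ + s + x i) N * sf f δ (δ + s + x i - a i - d1) N))
        * (∏ i, sf f δ (δ + st + xt i) N * sf f δ (δ + st + xt i - a i - d1) N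
            / (sf f δ (δ + st + xt i - a i) N * sf f δ (δ + st + xt i - d1) N))
        * Evw f δ a x s ![c0, c1, c2] ![d0, d1, d2] := by
  subst hd2
  have hfc := hdiff.continuous
  -- the perturbed parameters; the slopes respect the balancing condition
  set X : Fin m → ℤ := fun i => 10 * ((i : ℕ) + 1) with hXdef
  set xT : ℂ → Fin m → ℂ := fun t i => x i + (X i : ℂ) * t with hxT
  set xtT : ℂ → Fin m → ℂ := fun t i => xt i + ((-X i : ℤ) : ℂ) * t with hxtT
  set sT : ℂ → ℂ := fun t => s + ((0 : ℤ) : ℂ) * t with hsT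
  set stT : ℂ → ℂ := fun t => st + ((4 : ℤ) : ℂ) * t with hstT
  set c0T : ℂ → ℂ := fun t => c0 - 5 * t with hc0T
  set c2T : ℂ → ℂ := fun t => c2 + t with hc2T
  set d0T : ℂ → ℂ := fun t => d0 + t with hd0T
  set d1T : ℂ → ℂ := fun t => d1 + 3 * t with hd1T
  set ct0T : ℂ → ℂ := fun t => ct0 - t with hct0T
  set ct1T : ℂ → ℂ := fun t => ct1 + 4 * t with hct1T
  set ct2T : ℂ → ℂ := fun t => ct2 + 5 * t with hct2T
  have x0 : xT 0 = x := by funext i; simp [hxT]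
  have xt0 : xtT 0 = xt := by funext i; simp [hxtT]
  have s0 : sT 0 = s := by simp [hsT]
  have st0 : stT 0 = st := by simp [hstT]
  have c00 : c0T 0 = c0 := by simp [hc0T]
  have c20 : c2T 0 = c2 := by simp [hc2T]
  have d00 : d0T 0 = d0 := by simp [hd0T]
  have d10 : d1T 0 = d1 := by simp [hd1T]
  have ct00 : ct0T 0 = ct0 := by simp [hct0T]
  have ct10 : ct1T 0 = ct1 := by simp [hct1T]
  have ct20 : ct2T 0 = ct2 := by simp [hct2T]
  have kx : ∀ i, Continuous fun t => xT t i := fun i => by simp only [hxT]; fun_prop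
  have kxt : ∀ i, Continuous fun t => xtT t i := fun i => by simp only [hxtT]; fun_prop
  have ks : Continuous sT := by simp only [hsT]; fun_prop
  have kst : Continuous stT := by simp only [hstT]; fun_prop
  have kc0 : Continuous c0T := by simp only [hc0T]; fun_prop
  have kc2 : Continuous c2T := by simp only [hc2T]; fun_prop
  have kd0 : Continuous d0T := by simp only [hd0T]; fun_prop
  have kd1 : Continuous d1T := by simp only [hd1T]; fun_prop
  have kct0 : Continuous ct0T := by simp only [hct0T]; fun_prop
  have kct1 : Continuous ct1T := by simp only [hct1T]; fun_prop
  have kct2 : Continuous ct2T := by simp only [hct2T]; fun_prop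
  -- generic values of `t` are dense
  have gen : ∀ᶠ t in residual ℂ, GenericParams f δ (xT t) (sT t) (d0T t) (d1T t)
      ∧ GenericParams f δ (xtT t) (stT t) (d0T t) (d1T t)
      ∧ ∀ r : ℕ, r ≠ 0 → ∀ z : ℤ,
        f ((r : ℂ) * ((∑ i, a i) + c2T t - sT t) + (z : ℂ) * δ) ≠ 0 := by
    have hXne : ∀ i j : Fin m, i ≠ j → ∀ e : ℤ, (e = -1 ∨ e = 0 ∨ e = 1) →
        X i - X j + 2 * e ≠ 0 ∧ -X i - -X j + 2 * e ≠ 0 := by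
      intro i j hij e he
      have : (i : ℕ) ≠ j := fun h => hij (Fin.ext h)
      simp only [hXdef]
      omega
    refine Filter.Eventually.and ?_ (Filter.Eventually.and ?_ ?_)
    · refine eventually_residual_generic hf hdiff x X s 0 d0 d1
        (fun i j hij e he => (hXne i j hij e he).1) ?_ ?_
      · intro i e he; simp only [hXdef]; omega
      · intro i; simp only [hXdef]; omega
    · refine eventually_residual_generic hf hdiff xt (fun i => -X i) st 4 d0 d1
        (fun i j hij e he => (hXne i j hij e he).2) ?_ ?_
      · intro i e he; simp only [hXdef]; omega
      · intro i; simp only [hXdef]; omega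
    · simp only [eventually_countable_forall]
      intro r hr z
      refine eventually_residual_ne hf hdiff (r : ℤ) (by omega)
        ((r : ℂ) * ((∑ i, a i) + c2 - s) + (z : ℂ) * δ) _ fun t => ?_
      simp only [hc2T, hsT]; push_cast; ring
  have freq := mem_closure_iff_frequently.mp ((dense_of_mem_residual gen) (0 : ℂ))
  -- the remaining nonvanishing conditions are open
  have opn : ∀ g : ℂ → ℂ, Continuous g → (∀ l : ℕ, l < N → f (g 0 + (l : ℂ) * δ) ≠ 0) →
      ∀ᶠ t in nhds (0 : ℂ), sf f δ (g t) N ≠ 0 := fun g hg h =>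
    (continuous_sf_comp hfc hg N).continuousAt.eventually_ne (sf_ne_zero h)
  have o1 : ∀ᶠ t in nhds (0 : ℂ), ∀ i, sf f δ (δ + sT t + xT t i - a i) N ≠ 0 := by
    refine Filter.eventually_all.mpr fun i => opn _ ?_ ?_
    · exact ((continuous_const.add ks).add (kx i)).sub continuous_const
    · rw [s0, x0]; exact h3 i
  have o2 : ∀ᶠ t in nhds (0 : ℂ), ∀ i, sf f δ (δ + stT t + xtT t i - a i) N ≠ 0 := by
    refine Filter.eventually_all.mpr fun i => opn _ ?_ ?_
    · exact ((continuous_const.add kst).add (kxt i)).sub continuous_const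
    · rw [st0, xt0]; exact h3t i
  have o3 : ∀ᶠ t in nhds (0 : ℂ), sf f δ (δ + sT t - c0T t) N ≠ 0 := by
    refine opn _ ((continuous_const.add ks).sub kc0) ?_
    rw [s0, c00]; exact h5 0
  have o4 : ∀ᶠ t in nhds (0 : ℂ), sf f δ (δ + sT t - c1) N ≠ 0 := by
    refine opn _ ((continuous_const.add ks).sub continuous_const) ?_
    rw [s0]; exact h5 1
  have o5 : ∀ᶠ t in nhds (0 : ℂ), sf f δ (δ + sT t - c2T t) N ≠ 0 := by
    refine opn _ ((continuous_const.add ks).sub kc2) ?_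
    rw [s0, c20]; exact h5 2
  have L1 : ContinuousAt (fun t => Evw f δ a (xtT t) (stT t) ![ct0T t, ct1T t, ct2T t]
      ![d0T t, d1T t, -(N : ℂ) * δ]) 0 := by
    refine continuousAt_Evw hodd hfc N a xtT stT ct0T ct1T ct2T d0T d1T kxt kst kct0 kct1 kct2
      kd0 kd1 0 ?_ ?_ ?_ ?_ ?_ ?_ <;> simp only [xt0, st0, ct00, ct10, ct20, d00, d10]
    · exact h1t
    · exact h2t
    · exact h3t
    · exact h4t
    · exact h5t
    · exact h6t
  have L2 : ContinuousAt (fun t => Evw f δ a (xT t) (sT t) ![c0T t, c1, c2T t]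
      ![d0T t, d1T t, -(N : ℂ) * δ]) 0 := by
    refine continuousAt_Evw hodd hfc N a xT sT c0T (fun _ => c1) c2T d0T d1T kx ks kc0
      continuous_const kc2 kd0 kd1 0 ?_ ?_ ?_ ?_ ?_ ?_ <;> simp only [x0, s0, c00, c20, d00, d10]
    · exact h1
    · exact h2
    · exact h3
    · exact h4
    · exact h5
    · exact h6
  have S : ∀ {g : ℂ → ℂ}, Continuous g → ContinuousAt (fun t => sf f δ (g t) N) 0 :=
    fun hg => (continuous_sf_comp hfc hg N).continuousAt
  have L3 : ContinuousAt (fun t => ∏ i, sf f δ (δ + sT t + xT t i - a i) N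
      * sf f δ (δ + sT t + xT t i - d1T t) N
        / (sf f δ (δ + sT t + xT t i) N * sf f δ (δ + sT t + xT t i - a i - d1T t) N)) 0 := by
    refine tendsto_finsetProd _ fun i _ => ?_
    have k1 : Continuous fun t => δ + sT t + xT t i := (continuous_const.add ks).add (kx i)
    refine ContinuousAt.div ((S (k1.sub continuous_const)).mul (S (k1.sub kd1)))
      ((S k1).mul (S ((k1.sub continuous_const).sub kd1))) ?_
    simp only [s0, x0, d10]
    exact mul_ne_zero (sf_ne_zero (h7 i)) (sf_ne_zero (h8 i))
  have L4 : ContinuousAt (fun t => ∏ i, sf f δ (δ + stT t + xtT t i) N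
      * sf f δ (δ + stT t + xtT t i - a i - d1T t) N
        / (sf f δ (δ + stT t + xtT t i - a i) N * sf f δ (δ + stT t + xtT t i - d1T t) N)) 0 := by
    refine tendsto_finsetProd _ fun i _ => ?_
    have k1 : Continuous fun t => δ + stT t + xtT t i := (continuous_const.add kst).add (kxt i)
    refine ContinuousAt.div ((S k1).mul (S ((k1.sub continuous_const).sub kd1)))
      ((S (k1.sub continuous_const)).mul (S (k1.sub kd1))) ?_
    simp only [st0, xt0, d10]
    refine mul_ne_zero (sf_ne_zero (h3t i)) ?_
    rw [show δ + st + xt i - d1 = xt i + δ + st - d1 by ring]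
    exact sf_ne_zero (h6t i 1)
  have key := tendsto_nhds_unique_of_frequently_eq L1 ((L3.mul L4).mul L2) <| by
    refine (freq.and_eventually (o1.and (o2.and (o3.and (o4.and o5))))).mono ?_
    rintro t ⟨⟨g1, g2, g3⟩, p1, p2, p3, p4, p5⟩
    refine bailey_generic hf hdiff hodd hRiem hδ N a (xT t) (sT t) (c0T t) c1 (c2T t) (d0T t)
      (d1T t) ?_ (stT t) ?_ (ct0T t) (ct1T t) (ct2T t) ?_ ?_ ?_ (xtT t) ?_ g1 g2 g3 p1 p2 p3 p4 p5
    · simp only [hsT, hc0T, hc2T, hd0T, hd1T]; push_cast; linear_combination hbal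
    · simp only [hsT, hstT, hc0T, hc2T, hst]; push_cast; ring
    · simp only [hsT, hct0T, hc2T, hct0]; push_cast; ring
    · simp only [hsT, hct1T, hc0T, hc2T, hct1]; push_cast; ring
    · simp only [hsT, hct2T, hc0T, hct2]; push_cast; ring
    · intro i
      simp only [hxT, hxtT, hxt]; push_cast; ring
  simpa only [Pi.mul_apply, x0, xt0, s0, st0, c00, c20, d00, d10, ct00, ct10, ct20] using key
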